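/- arXiv:1208.4312 — 4 statements merged into one kernel-verified Lean document; each statement's English description precedes it below -/
import Mathlib

section
/- Fix integers n ≥ 2 and k ≥ 3, and set γ_k := 1/2 − 1/k and μ_k := k/2 − 1. Let A₁ > 0 and define Z₁(u) := A₁ u^{−2}(1 − u²)^{1+2γ_k} for u ∈ (0,1). Then there exist a function ζ : (0,1) → ℝ, a constant B₁ > 0, and a constant A₂^min < ∞, all depending only on n, k, A₁, such that for every A₂ ≥ A₂^min there exists a time τ₁ (depending only on n, k, A₁, A₂) so that the functions z_±(u,τ) := e^{−2γ_k τ} Z₁(u) ± A₂ e^{−4γ_k τ} ζ(u) satisfy D_u[z₊] ≥ 0 (supersolution) and D_u[z₋] ≤ 0 (subsolution) at every point (u,τ) of the space-time region B₁ √(A₂/A₁) e^{−γ_k τ} ≤ u ≤ 1 − B₁ (A₂/A₁)^{k/2} e^{−μ_k τ}, τ ≥ τ₁. -/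
open Topology Filter Asymptotics Set

/-- `γ_k = 1/2 - 1/k`. -/
noncomputable def gam (k : ℕ) : ℝ := 1/2 - 1/(k:ℝ)

/-- `μ_k = k/2 - 1`. -/
noncomputable def mu (k : ℕ) : ℝ := (k:ℝ)/2 - 1

/-- The quadratic operator `Q_u[Z] = Z Z'' - (1/2)(Z')² - Z Z'/u - 2(n-1)Z²/u²`
applied to a function of `u` alone. -/
noncomputable def Qop (n : ℕ) (Z : ℝ → ℝ) (u : ℝ) : ℝ :=
  Z u * deriv (deriv Z) u - (1/2) * (deriv Z u)^2
    - Z u * deriv Z u / u - 2 * ((n:ℝ) - 1) * (Z u)^2 / u^2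

/-- The parabolic operator
`D_u[z] = z_τ - (1/2)(u⁻¹ - u) z_u - u⁻² z - Q_u[z]/(2(n-1))`
applied to `z = z(u,τ)`. -/
noncomputable def Dop (n : ℕ) (z : ℝ → ℝ → ℝ) (u τ : ℝ) : ℝ :=
  deriv (z u) τ - (1/2) * (u⁻¹ - u) * deriv (fun x => z x τ) u
    - z u τ / u^2 - Qop n (fun x => z x τ) u / (2 * ((n:ℝ) - 1))

/-- `Z₁(u) = A₁ u⁻² (1-u²)^{1+2γ_k}`. -/
noncomputable def Z1 (k : ℕ) (A₁ : ℝ) (u : ℝ) : ℝ :=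
  A₁ * u ^ (-2:ℝ) * (1 - u^2) ^ (1 + 2 * gam k)

lemma hasDeriv_G (a x : ℝ) (hx : x ∈ Ioo (0:ℝ) 1) :
    HasDerivAt (fun y : ℝ => (1 - y^2)^a) (-2*a*x*(1-x^2)^a/(1-x^2)) x := by
  have hv : 0 < 1 - x^2 := by nlinarith [hx.1, hx.2]
  have h1 : HasDerivAt (fun y : ℝ => 1 - y^2) (-(2*x)) x := by
    simpa using (hasDerivAt_pow 2 x).const_sub 1
  have h2 := h1.rpow_const (p := a) (Or.inl hv.ne')
  convert h2 using 1
  rw [Real.rpow_sub_one hv.ne']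
  ring

/-- First derivative formula. -/
noncomputable def zp (a c1 c2 x : ℝ) : ℝ :=
  c1*(-2*(1-x^2)^a*(1/x^3+a/x))
    + c2*(((1-x^2)^a)^2*(-4*a*(1-2*x^2)/((1-x^2)*x^3) - 4*(1-x^2)/x^5))

/-- Second derivative formula. -/
noncomputable def zpp (a c1 c2 x : ℝ) : ℝ :=
  c1*(4*a*(1-x^2)^a/(1-x^2)*(1/x^2+a) + 2*(1-x^2)^a*(3/x^4+a/x^2))
    + c2*(((1-x^2)^a)^2*((16*a^2*x^2-4*a*(1-x^2)-8*a*x^2)/(1-x^2)^2*((1-2*x^2)/x^4)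
      + 32*a/x^4 + (20-12*x^2)/x^6))

/-- The function itself. -/
noncomputable def zz (a c1 c2 x : ℝ) : ℝ :=
  c1*((1-x^2)^a*(1-x^2)/x^2) + c2*(((1-x^2)^a)^2*(1-2*x^2)/x^4)

lemma hd_v (x : ℝ) : HasDerivAt (fun y : ℝ => 1 - y^2) (-(2*x)) x := by
  simpa using (hasDerivAt_pow 2 x).const_sub 1

lemma hd_w (x : ℝ) : HasDerivAt (fun y : ℝ => 1 - 2*y^2) (-(4*x)) x := by
  have := ((hasDerivAt_pow 2 x).const_mul 2).const_sub 1
  refine this.congr_deriv ?_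
  norm_num
  try ring

lemma hasDeriv_zz (a c1 c2 x : ℝ) (hx : x ∈ Ioo (0:ℝ) 1) :
    HasDerivAt (zz a c1 c2) (zp a c1 c2 x) x := by
  have hv : 1 - x^2 ≠ 0 := by nlinarith [hx.1, hx.2]
  have hx0 : x ≠ 0 := hx.1.ne'
  have hG := hasDeriv_G a x hx
  have h := (((hG.mul (hd_v x)).div (hasDerivAt_pow 2 x) (by positivity)).const_mul c1).add
    ((((hG.pow 2).mul (hd_w x)).div (hasDerivAt_pow 4 x) (by positivity)).const_mul c2)
  refine h.congr_deriv ?_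
  simp only [zp, Pi.mul_apply, Pi.pow_apply]
  generalize (1-x^2)^a = g
  push_cast
  field_simp
  ring

lemma hasDeriv_zp (a c1 c2 x : ℝ) (hx : x ∈ Ioo (0:ℝ) 1) :
    HasDerivAt (zp a c1 c2) (zpp a c1 c2 x) x := by
  have hv : 1 - x^2 ≠ 0 := by nlinarith [hx.1, hx.2]
  have hx0 : x ≠ 0 := hx.1.ne'
  have hG := hasDeriv_G a x hx
  have h1 := ((hG.const_mul (-2)).mul
    (((hasDerivAt_const x (1:ℝ)).div (hasDerivAt_pow 3 x) (by positivity)).add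
      ((hasDerivAt_const x a).div (hasDerivAt_id x) hx0))).const_mul c1
  have h2 := ((hG.pow 2).mul
    ((((hd_w x).const_mul (-4*a)).div ((hd_v x).mul (hasDerivAt_pow 3 x))
      (mul_ne_zero hv (by positivity))).sub
      (((hd_v x).const_mul 4).div (hasDerivAt_pow 5 x) (by positivity)))).const_mul c2
  refine (h1.add h2).congr_deriv ?_
  simp only [zpp, Pi.mul_apply, Pi.pow_apply, Pi.add_apply, Pi.sub_apply, Pi.div_apply, id]
  generalize (1-x^2)^a = g
  push_cast
  field_simp
  ring

lemma derivs_f (a c1 c2 u : ℝ) (hu : u ∈ Ioo (0:ℝ) 1) (f : ℝ → ℝ)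
    (hf : ∀ x ∈ Ioo (0:ℝ) 1, f x = zz a c1 c2 x) :
    f u = zz a c1 c2 u ∧ deriv f u = zp a c1 c2 u ∧ deriv (deriv f) u = zpp a c1 c2 u := by
  have hev : ∀ x ∈ Ioo (0:ℝ) 1, Ioo (0:ℝ) 1 ∈ 𝓝 x := fun x hx => isOpen_Ioo.mem_nhds hx
  have h1 : ∀ x ∈ Ioo (0:ℝ) 1, deriv f x = zp a c1 c2 x := by
    intro x hx
    have : f =ᶠ[𝓝 x] zz a c1 c2 := by filter_upwards [hev x hx] with y hy using hf y hy
    rw [this.deriv_eq, (hasDeriv_zz a c1 c2 x hx).deriv]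
  refine ⟨hf u hu, h1 u hu, ?_⟩
  have : deriv f =ᶠ[𝓝 u] zp a c1 c2 := by filter_upwards [hev u hu] with y hy using h1 y hy
  rw [this.deriv_eq, (hasDeriv_zp a c1 c2 u hu).deriv]

/-- Linear part identity. -/
lemma lin_id (a c1 c2 u : ℝ) (hu : u ∈ Ioo (0:ℝ) 1) :
    zz a (-a*c1) (-2*a*c2) u - (1/2)*(u⁻¹-u)*zp a c1 c2 u - zz a c1 c2 u/u^2
      = c2 * (((1-u^2)^a)^2*((1-u^2)^2+u^4)/u^6) := by
  have hv : 1 - u^2 ≠ 0 := by nlinarith [hu.1, hu.2]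
  have hx0 : u ≠ 0 := hu.1.ne'
  simp only [zz, zp]
  generalize (1-u^2)^a = g
  field_simp
  ring

lemma abs_le_of_mul (x y b C : ℝ) (hxy : x = b*y) (hb : 0 ≤ b) (hy : |y| ≤ C) : |x| ≤ C*b := by
  rw [hxy, abs_mul, abs_of_nonneg hb]; nlinarith

lemma bounds (a c1 c2 u : ℝ) (ha : 0 ≤ a) (ha1 : a ≤ 1) (hu : u ∈ Ioo (0:ℝ) 1) (hc1 : 0 ≤ c1)
    (hc : |c2| * (1-u^2)^a ≤ c1 * (u^2*(1-u^2))) :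
    |zz a c1 c2 u| ≤ 2 * ((c1*(1-u^2)^a/(u^4*(1-u^2))) * ((1-u^2)^2*u^2)) ∧
    |zp a c1 c2 u| ≤ 12 * ((c1*(1-u^2)^a/(u^4*(1-u^2))) * ((1-u^2)*u)) ∧
    |zpp a c1 c2 u| ≤ 96 * (c1*(1-u^2)^a/(u^4*(1-u^2))) := by
  obtain ⟨h0, h1⟩ := hu
  have hv : 0 < 1 - u^2 := by nlinarith
  have hg : 0 < (1-u^2)^a := Real.rpow_pos_of_pos hv a
  set g := (1-u^2)^a with hgdef
  obtain ⟨s, hs⟩ : ∃ s, s = u^2 := ⟨_, rfl⟩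
  have hs0 : 0 < s := by rw [hs]; positivity
  have hs1 : s < 1 := by linarith
  have hvne := hv.ne'
  have hune := h0.ne'
  have has : 0 ≤ a*s := by positivity
  have has1 : a*s ≤ 1 := by nlinarith
  have haa : a^2 ≤ 1 := by nlinarith
  have haas : a^2*s ≤ 1 := by nlinarith
  have haas0 : 0 ≤ a^2*s := by positivity
  -- generic combination
  have key : ∀ (X p q P R b : ℝ), X = c1*g*b*p + c2*g^2/(u^2*(1-u^2))*b*q → 0 ≤ b → |p| ≤ P →
      |q| ≤ R → |X| ≤ (P+R)*(c1*g*b) := by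
    intro X p q P R b hX hb hp hq
    have hk : |c2*g^2/(u^2*(1-u^2))| ≤ c1*g := by
      rw [abs_div, abs_mul, abs_of_pos (by positivity : 0 < g^2),
        abs_of_pos (by positivity : 0 < u^2*(1-u^2)), div_le_iff₀ (by positivity)]
      nlinarith
    calc |X| ≤ |c1*g*b*p| + |c2*g^2/(u^2*(1-u^2))*b*q| := by rw [hX]; exact abs_add_le _ _
      _ = c1*g*b*|p| + |c2*g^2/(u^2*(1-u^2))| * b*|q| := by
          rw [abs_mul, abs_mul _ q, abs_of_nonneg (by positivity : 0 ≤ c1*g*b),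
            abs_mul _ b, abs_of_nonneg hb]
      _ ≤ c1*g*b*P + c1*g*b*R := by gcongr
      _ = _ := by ring
  refine ⟨?_, ?_, ?_⟩
  · have := key (zz a c1 c2 u) 1 (1-2*s) 1 1 ((1-u^2)/u^2)
      (by simp only [zz, ← hgdef, hs]; field_simp) (by positivity) (by simp)
      (abs_le.2 ⟨by linarith, by linarith⟩)
    refine this.trans (le_of_eq ?_)
    field_simp; ring
  · have := key (zp a c1 c2 u) (-2*(1+a*s)) (-4*a*s*(1-2*s)-4*(1-s)^2) 4 8 (1/u^3)
      (by simp only [zp, ← hgdef, hs]; field_simp) (by positivity)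
      (abs_le.2 ⟨by linarith, by linarith⟩)
      (abs_le.2 ⟨by nlinarith, by nlinarith⟩)
    refine this.trans (le_of_eq ?_)
    field_simp; ring
  · have := key (zpp a c1 c2 u) (4*(a*s)*(1+a*s)+2*(1-s)*(3+a*s))
      ((16*a*(a*s)-4*a*(1-s)-8*(a*s))*(s*(1-2*s)) + 32*(a*s)*(1-s)^2+(20-12*s)*(1-s)^2)
      16 80 (1/(u^4*(1-u^2)))
      (by simp only [zpp, ← hgdef, hs]; field_simp) (by positivity)
      (abs_le.2 ⟨by nlinarith [mul_nonneg (sub_nonneg.2 hs1.le) has], by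
        nlinarith [mul_nonneg (sub_nonneg.2 hs1.le) has, mul_nonneg (sub_nonneg.2 hs1.le) (sub_nonneg.2 has1)]⟩)
      (by
        have e1 : |16*a*(a*s)-4*a*(1-s)-8*(a*s)| ≤ 28 :=
          abs_le.2 ⟨by nlinarith, by nlinarith⟩
        have e2 : |s*(1-2*s)| ≤ 1 := abs_le.2 ⟨by nlinarith, by nlinarith⟩
        have e3 : |(16*a*(a*s)-4*a*(1-s)-8*(a*s))*(s*(1-2*s))| ≤ 28 := by
          rw [abs_mul]; nlinarith [abs_nonneg (s*(1-2*s)), abs_nonneg (16*a*(a*s)-4*a*(1-s)-8*(a*s))]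
        have e4 : (1-s)^2 ≤ 1 := by nlinarith
        have e5 : 0 ≤ (1-s)^2 := sq_nonneg _
        have e6 := abs_le.1 e3
        have e7 : 32*(a*s)*(1-s)^2 ≤ 32 := by nlinarith
        have e8 : (20-12*s)*(1-s)^2 ≤ 20 := by nlinarith
        have e9 : 0 ≤ 32*(a*s)*(1-s)^2 := by positivity
        have e10 : 0 ≤ (20-12*s)*(1-s)^2 := mul_nonneg (by linarith) e5
        exact abs_le.2 ⟨by linarith, by linarith⟩)
    refine this.trans (le_of_eq ?_)
    field_simp; ring

lemma Q_bound (m M u v z z1 z2 : ℝ) (hm : 1 ≤ m) (hM : 0 ≤ M) (hu : 0 < u)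
    (hv : 0 < v) (hv1 : v ≤ 1) (hz : |z| ≤ 2*(M*(v^2*u^2))) (hz1 : |z1| ≤ 12*(M*(v*u)))
    (hz2 : |z2| ≤ 96*M) :
    |(z*z2 - (1/2)*z1^2 - z*z1/u - 2*m*z^2/u^2)/(2*m)| ≤ 148*(M^2*(v^2*u^2)) := by
  have hW : 0 ≤ M^2*(v^2*u^2) := by positivity
  have t1 : |z*z2| ≤ 192*(M^2*(v^2*u^2)) := by
    rw [abs_mul]
    calc |z| * |z2| ≤ (2*(M*(v^2*u^2)))*(96*M) := by gcongr
      _ = _ := by ring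
  have t2 : |z1^2| ≤ 144*(M^2*(v^2*u^2)) := by
    rw [abs_pow]
    calc |z1|^2 ≤ (12*(M*(v*u)))^2 := by gcongr
      _ = _ := by ring
  have t3 : |z*z1/u| ≤ 24*(M^2*(v^2*u^2)) := by
    rw [abs_div, abs_mul, abs_of_pos hu, div_le_iff₀ hu]
    calc |z| * |z1| ≤ (2*(M*(v^2*u^2)))*(12*(M*(v*u))) := by gcongr
      _ = 24*(M^2*(v^2*u^2))*u*v := by ring
      _ ≤ 24*(M^2*(v^2*u^2))*u*1 := by gcongr
      _ = _ := by ring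
  have t4 : |z^2/u^2| ≤ 4*(M^2*(v^2*u^2)) := by
    rw [abs_div, abs_pow, abs_of_pos (by positivity : 0 < u^2), div_le_iff₀ (by positivity)]
    calc |z|^2 ≤ (2*(M*(v^2*u^2)))^2 := by gcongr
      _ = 4*(M^2*(v^2*u^2))*u^2*v^2 := by ring
      _ ≤ 4*(M^2*(v^2*u^2))*u^2*1 := by gcongr; nlinarith
      _ = _ := by ring
  have e : (z*z2 - (1/2)*z1^2 - z*z1/u - 2*m*z^2/u^2)/(2*m)
      = (z*z2 - (1/2)*z1^2 - z*z1/u)/(2*m) - z^2/u^2 := by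
    have : m ≠ 0 := by positivity
    field_simp
  have t5 : |(z*z2 - (1/2)*z1^2 - z*z1/u)/(2*m)| ≤ 144*(M^2*(v^2*u^2)) := by
    rw [abs_div, abs_of_pos (by positivity : 0 < 2*m), div_le_iff₀ (by positivity)]
    have : |z*z2 - (1/2)*z1^2 - z*z1/u| ≤ 288*(M^2*(v^2*u^2)) := by
      rw [abs_le] at *
      constructor <;> linarith [t1.1, t1.2, t2.1, t2.2, t3.1, t3.2]
    nlinarith
  rw [e]
  rw [abs_le] at *
  constructor <;> linarith [t5.1, t5.2, t4.1, t4.2]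

lemma Dop_est (n k : ℕ) (hn : 2 ≤ n) (a A₁ c : ℝ) (hak : a = 2 * gam k) (ha : 0 ≤ a) (ha1 : a ≤ 1)
    (hA₁ : 0 < A₁) (u τ : ℝ) (hu : u ∈ Ioo (0:ℝ) 1)
    (hc : |c| * Real.exp (-a*τ) * (1-u^2)^a ≤ A₁ * (u^2*(1-u^2))) :
    |Dop n (fun u' τ' => Real.exp (-2 * gam k * τ') * Z1 k A₁ u'
        + c * Real.exp (-4 * gam k * τ') * (((1-u'^2)^a)^2*(1-2*u'^2)/u'^4)) u τ
      - c * (Real.exp (-a*τ)^2 * (((1-u^2)^a)^2*((1-u^2)^2+u^4)/u^6))|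
      ≤ 148 * A₁^2 * (Real.exp (-a*τ)^2 * (((1-u^2)^a)^2/u^6)) := by
  obtain ⟨E, hE⟩ : ∃ E, E = Real.exp (-a*τ) := ⟨_, rfl⟩
  have hE0 : 0 < E := hE ▸ Real.exp_pos _
  have hZ : ∀ x ∈ Ioo (0:ℝ) 1, Z1 k A₁ x = A₁*((1-x^2)^a*(1-x^2)/x^2) := by
    intro x hx
    have hv : 0 < 1 - x^2 := by nlinarith [hx.1, hx.2]
    rw [Z1, ← hak, Real.rpow_add hv, Real.rpow_one, Real.rpow_neg hx.1.le]
    norm_cast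
    field_simp
  have hexp2 : ∀ t, Real.exp (-2 * gam k * t) = Real.exp (-a*t) := by
    intro t; rw [hak]; congr 1; ring
  have hexp4 : ∀ t, Real.exp (-4 * gam k * t) = Real.exp (-a*t)^2 := by
    intro t; rw [hak, ← Real.exp_nat_mul]; congr 1; push_cast; ring
  have hv : 0 < 1 - u^2 := by nlinarith [hu.1, hu.2]
  have hd := derivs_f a (A₁*E) (c*E^2) u hu
    (fun x => Real.exp (-2 * gam k * τ) * Z1 k A₁ x
        + c * Real.exp (-4 * gam k * τ) * (((1-x^2)^a)^2*(1-2*x^2)/x^4))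
    (by
      intro x hx
      simp only [hZ x hx, hexp2, hexp4, zz, ← hE]; ring)
  have hτ : deriv (fun t => Real.exp (-2 * gam k * t) * Z1 k A₁ u
        + c * Real.exp (-4 * gam k * t) * (((1-u^2)^a)^2*(1-2*u^2)/u^4)) τ
      = zz a (-a*(A₁*E)) (-2*a*(c*E^2)) u := by
    have e1 : HasDerivAt (fun t => Real.exp (-2*gam k*t)) (Real.exp (-2*gam k*τ)*(-2*gam k)) τ := by
      simpa using ((hasDerivAt_id τ).const_mul (-2*gam k)).exp
    have e2 : HasDerivAt (fun t => Real.exp (-4*gam k*t)) (Real.exp (-4*gam k*τ)*(-4*gam k)) τ := by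
      simpa using ((hasDerivAt_id τ).const_mul (-4*gam k)).exp
    have e3 := (e1.mul_const (Z1 k A₁ u)).add
      ((e2.const_mul c).mul_const (((1-u^2)^a)^2*(1-2*u^2)/u^4))
    have e4 := e3.deriv
    refine Eq.trans e4 ?_
    rw [hZ u hu, hexp2, hexp4, ← hE, zz, show gam k = a/2 by rw [hak]; ring]
    ring
  obtain ⟨d0, d1, d2⟩ := hd
  have hb := bounds a (A₁*E) (c*E^2) u ha ha1 hu (by positivity) (by
    rw [abs_mul, abs_of_pos (by positivity : 0 < E^2)]
    rw [← hE] at hc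
    nlinarith)
  obtain ⟨b0, b1, b2⟩ := hb
  have hm : (1:ℝ) ≤ (n:ℝ) - 1 := by
    have : (2:ℝ) ≤ n := by exact_mod_cast hn
    linarith
  have hg : 0 < (1-u^2)^a := Real.rpow_pos_of_pos hv a
  have hu0 : 0 < u := hu.1
  have hQ := Q_bound ((n:ℝ)-1) (A₁*E*(1-u^2)^a/(u^4*(1-u^2))) u (1-u^2) _ _ _ hm (by positivity)
    hu0 hv (by nlinarith) b0 b1 b2
  have hl := lin_id a (A₁*E) (c*E^2) u hu
  rw [← hE]
  simp only [Dop, Qop]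
  rw [hτ, d1, d2, d0]
  have e : 148 * A₁^2 * (E^2 * (((1-u^2)^a)^2/u^6))
      = 148*((A₁*E*(1-u^2)^a/(u^4*(1-u^2)))^2*((1-u^2)^2*u^2)) := by
    have := hv.ne'
    generalize (1-u^2)^a = g
    field_simp
  rw [e, hl]
  have e' : c*E^2 * (((1-u^2)^a)^2*((1-u^2)^2+u^4)/u^6)
    = c*(E^2 * (((1-u^2)^a)^2*((1-u^2)^2+u^4)/u^6)) := by ring
  rw [e', sub_sub_cancel_left, abs_neg]
  exact hQ

lemma region (k : ℕ) (hk : 3 ≤ k) (A₁ A₂ u τ : ℝ) (hA₁ : 0 < A₁) (hA₂ : 0 < A₂)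
    (h1 : (2:ℝ)^k * Real.sqrt (A₂ / A₁) * Real.exp (-gam k * τ) ≤ u)
    (h2 : u ≤ 1 - (2:ℝ)^k * (A₂ / A₁) ^ ((k:ℝ)/2) * Real.exp (-mu k * τ)) :
    u ∈ Ioo (0:ℝ) 1 ∧
    A₂ * Real.exp (-(2*gam k)*τ) * (1-u^2)^(2*gam k) ≤ A₁ * (u^2*(1-u^2)) := by
  have hk3 : (3:ℝ) ≤ k := by exact_mod_cast hk
  have hk0 : (k:ℝ) ≠ 0 := by positivity
  have hr : 0 < A₂/A₁ := by positivity
  have hu0 : 0 < u := lt_of_lt_of_le (by positivity) h1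
  have hu1 : u < 1 := lt_of_le_of_lt h2 (by
    have : 0 < (2:ℝ)^k * (A₂ / A₁) ^ ((k:ℝ)/2) * Real.exp (-mu k * τ) := by positivity
    linarith)
  refine ⟨⟨hu0, hu1⟩, ?_⟩
  have hv : 0 < 1-u^2 := by nlinarith
  obtain ⟨E, hE⟩ : ∃ E, E = Real.exp (-(2*gam k)*τ) := ⟨_, rfl⟩
  have hE0 : 0 < E := hE ▸ Real.exp_pos _
  obtain ⟨X, hX⟩ : ∃ X, X = A₂/A₁*E := ⟨_, rfl⟩
  have hX0 : 0 < X := by rw [hX]; positivity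
  have h2k : (2:ℝ) ≤ 2^k := by
    calc (2:ℝ) = 2^1 := by norm_num
      _ ≤ 2^k := pow_le_pow_right₀ (by norm_num) (by omega)
  -- s bound
  have hs : 2*X ≤ u^2 := by
    have : ((2:ℝ)^k * Real.sqrt (A₂ / A₁) * Real.exp (-gam k * τ))^2 ≤ u^2 := by gcongr
    have e : ((2:ℝ)^k * Real.sqrt (A₂ / A₁) * Real.exp (-gam k * τ))^2 = (2^k)^2 * X := by
      rw [mul_pow, mul_pow, Real.sq_sqrt hr.le, hX, hE, ← Real.exp_nat_mul]
      rw [mul_assoc]; congr 3; push_cast; ring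
    rw [e] at this
    have h4 : (2:ℝ) ≤ (2^k)^2 := by nlinarith
    nlinarith
  -- v bound
  have hw : 2*X ≤ (1-u^2)^(2/(k:ℝ)) := by
    have h3 : (2:ℝ)^k * (A₂ / A₁) ^ ((k:ℝ)/2) * Real.exp (-mu k * τ) ≤ 1-u^2 := by nlinarith
    have e : (2*X)^((k:ℝ)/2) ≤ (2:ℝ)^k * (A₂ / A₁) ^ ((k:ℝ)/2) * Real.exp (-mu k * τ) := by
      rw [hX, Real.mul_rpow (by norm_num) (by positivity), Real.mul_rpow hr.le hE0.le, hE,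
        ← Real.exp_mul, mul_assoc ((2:ℝ)^k), ← Real.rpow_natCast]
      gcongr ?_ * (_ * ?_)
      · exact Real.rpow_le_rpow_of_exponent_le (by norm_num) (by linarith)
      · apply le_of_eq
        congr 1
        rw [gam, mu]; field_simp
    calc 2*X = ((2*X)^((k:ℝ)/2))^(2/(k:ℝ)) := by
          rw [← Real.rpow_mul (by positivity)]
          rw [show (k:ℝ)/2*(2/k) = 1 by field_simp, Real.rpow_one]
      _ ≤ _ := by
          apply Real.rpow_le_rpow (by positivity) (e.trans h3) (by positivity)
  -- product
  have hp : X ≤ u^2*(1-u^2)^(2/(k:ℝ)) := by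
    rcases le_total (u^2) (1/2) with h | h
    · have : (1-u^2) ≤ (1-u^2)^(2/(k:ℝ)) := by
        conv_lhs => rw [← Real.rpow_one (1-u^2)]
        apply Real.rpow_le_rpow_of_exponent_ge hv (by nlinarith)
        rw [div_le_one (by positivity)]; linarith
      nlinarith
    · nlinarith
  have hg : 1-u^2 = (1-u^2)^(2/(k:ℝ)) * (1-u^2)^(2*gam k) := by
    rw [← Real.rpow_add hv]
    rw [show 2/(k:ℝ) + 2*gam k = 1 by rw [gam]; ring, Real.rpow_one]
  have hg0 : 0 < (1-u^2)^(2*gam k) := Real.rpow_pos_of_pos hv _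
  rw [← hE]
  calc A₂*E*(1-u^2)^(2*gam k) = A₁*(X*(1-u^2)^(2*gam k)) := by rw [hX]; field_simp
    _ ≤ A₁*(u^2*(1-u^2)^(2/(k:ℝ))*(1-u^2)^(2*gam k)) := by gcongr
    _ = A₁*(u^2*((1-u^2)^(2/(k:ℝ))*(1-u^2)^(2*gam k))) := by ring
    _ = _ := by rw [← hg]

/-- existence of sub- and supersolutions in the intermediate region. -/
theorem stmt0 (n k : ℕ) (hn : 2 ≤ n) (hk : 3 ≤ k) (A₁ : ℝ) (hA₁ : 0 < A₁) :
    ∃ (ζ : ℝ → ℝ) (B₁ A₂min : ℝ), 0 < B₁ ∧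
      ∀ A₂ : ℝ, A₂min ≤ A₂ → ∃ τ₁ : ℝ, ∀ u τ : ℝ, τ₁ ≤ τ →
        B₁ * Real.sqrt (A₂ / A₁) * Real.exp (-gam k * τ) ≤ u →
        u ≤ 1 - B₁ * (A₂ / A₁) ^ ((k:ℝ)/2) * Real.exp (-mu k * τ) →
        0 ≤ Dop n (fun u' τ' =>
            Real.exp (-2 * gam k * τ') * Z1 k A₁ u'
              + A₂ * Real.exp (-4 * gam k * τ') * ζ u') u τ ∧
        Dop n (fun u' τ' =>
            Real.exp (-2 * gam k * τ') * Z1 k A₁ u'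
              - A₂ * Real.exp (-4 * gam k * τ') * ζ u') u τ ≤ 0 := by
  refine ⟨fun u => ((1-u^2)^(2*gam k))^2*(1-2*u^2)/u^4, 2^k, 296*A₁^2, by positivity, ?_⟩
  intro A₂ hA₂
  refine ⟨0, fun u τ _ h1 h2 => ?_⟩
  have hA₂0 : 0 < A₂ := lt_of_lt_of_le (by positivity) hA₂
  obtain ⟨hu, hr⟩ := region k hk A₁ A₂ u τ hA₁ hA₂0 h1 h2
  have hk3 : (3:ℝ) ≤ k := by exact_mod_cast hk
  have hik : 1/(k:ℝ) ≤ 1/3 := one_div_le_one_div_of_le (by norm_num) hk3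
  have hik0 : 0 ≤ 1/(k:ℝ) := by positivity
  have ha : 0 ≤ 2*gam k := by rw [gam]; linarith
  have ha1 : 2*gam k ≤ 1 := by rw [gam]; linarith
  have hp := Dop_est n k hn (2*gam k) A₁ A₂ rfl ha ha1 hA₁ u τ hu (by rwa [abs_of_pos hA₂0])
  have hm := Dop_est n k hn (2*gam k) A₁ (-A₂) rfl ha ha1 hA₁ u τ hu
    (by rwa [abs_neg, abs_of_pos hA₂0])
  simp only [neg_mul, ← sub_eq_add_neg] at hm
  simp only [← neg_mul] at hm
  have hu0 : 0 < u := hu.1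
  have hmain : 148 * A₁^2 * (Real.exp (-(2*gam k)*τ)^2 * (((1-u^2)^(2*gam k))^2/u^6))
      ≤ A₂ * (Real.exp (-(2*gam k)*τ)^2 * (((1-u^2)^(2*gam k))^2*((1-u^2)^2+u^4)/u^6)) := by
    have hW : 0 ≤ Real.exp (-(2*gam k)*τ)^2 * (((1-u^2)^(2*gam k))^2/u^6) := by positivity
    have hh : 1/2 ≤ (1-u^2)^2+u^4 := by nlinarith [sq_nonneg (1-2*u^2)]
    calc 148 * A₁^2 * (Real.exp (-(2*gam k)*τ)^2 * (((1-u^2)^(2*gam k))^2/u^6))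
        ≤ (A₂*((1-u^2)^2+u^4)) * (Real.exp (-(2*gam k)*τ)^2 * (((1-u^2)^(2*gam k))^2/u^6)) := by
          apply mul_le_mul_of_nonneg_right _ hW
          nlinarith
      _ = _ := by ring
  have hmain2 := hmain
  rw [show -(2*gam k)*τ = -2*gam k*τ by ring] at hmain2
  have hp' := abs_le.1 hp
  have hm' := abs_le.1 hm
  exact ⟨by linarith [hp'.1], by linarith [hm'.2, hmain2]⟩
end

section
/- Fix integers n ≥ 2 and k ≥ 3, a constant A₄ > 0, set Â := 1/k + 1, let 𝔅 be a Bryant soliton profile, and put B̂(r) := 𝔅(A₄ r). Consider the linear inhomogeneous ODE B̂(r) β″(r) + ((n−1)/r − B̂′(r) − B̂(r)/r) β′(r) + (B̂″(r) − B̂′(r)/r + 2(n−1)(1 − 2B̂(r))/r²) β(r) = 2(n−1) Â r B̂′(r) on (0,∞). Then: (i) there exists a solution β_p with β_p(r) = r² + o(r²) as r ↘ 0; and (ii) every solution β of this ODE satisfies β(r) → −2Â/A₄² as r → ∞. -/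
open Topology Filter Asymptotics Set

/-- The elliptic operator
`E_r[z] = z z'' - (1/2)(z')² + (n-1-z)z'/r + 2(n-1)(1-z)z/r²`. -/
noncomputable def Eop (n : ℕ) (z : ℝ → ℝ) (r : ℝ) : ℝ :=
  z r * deriv (deriv z) r - (1/2) * (deriv z r)^2
    + ((n:ℝ) - 1 - z r) * deriv z r / r
    + 2 * ((n:ℝ) - 1) * (1 - z r) * z r / r^2

/-- A Bryant soliton profile. -/
structure BryantProfile (n : ℕ) where
  toFun : ℝ → ℝ
  b : ℝ
  b2 : ℝ
  ctilde : ℝ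
  smooth : ContDiffOn ℝ (⊤ : ℕ∞) toFun (Set.Ici 0)
  mem_Ioc : ∀ r : ℝ, 0 ≤ r → toFun r ∈ Set.Ioc (0:ℝ) 1
  val_zero : toFun 0 = 1
  deriv_zero : deriv toFun 0 = 0
  deriv_neg : ∀ r : ℝ, 0 < r → deriv toFun r < 0
  soliton : ∀ r : ℝ, 0 < r → Eop n toFun r = 0
  b_pos : 0 < b
  expand_zero : (fun ρ => toFun ρ - (1 - b * ρ^2)) =O[𝓝[>] (0:ℝ)] fun ρ => ρ^4
  expand_zero_deriv :
    (fun ρ => deriv toFun ρ + 2 * b * ρ) =O[𝓝[>] (0:ℝ)] fun ρ => ρ^3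
  expand_top :
    (fun ρ => toFun ρ - (ρ ^ (-2:ℝ) + b2 * ρ ^ (-4:ℝ))) =O[atTop] fun ρ => ρ ^ (-6:ℝ)
  expand_top_deriv :
    (fun ρ => deriv toFun ρ - (-2 * ρ ^ (-3:ℝ) - 4 * b2 * ρ ^ (-5:ℝ)))
      =O[atTop] fun ρ => ρ ^ (-7:ℝ)
  ctilde_pos : 0 < ctilde
  deriv_lower : ∀ r : ℝ, 0 < r → ctilde * min (r^2) (r ^ (-2:ℝ)) ≤ -(r * deriv toFun r)

/-- `β`, with first and second derivatives `β'`, `β''`, solves the linear inhomogeneous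
ODE `B̂ β'' + ((n-1)/r - B̂' - B̂/r) β' + (B̂'' - B̂'/r + 2(n-1)(1-2B̂)/r²) β = 2(n-1) Â r B̂'`
on `(0,∞)`, where `B̂(r) = 𝔅(A₄ r)`. -/
def IsBetaSol (n : ℕ) (Ahat : ℝ) (Bhat : ℝ → ℝ) (β β' β'' : ℝ → ℝ) : Prop :=
  (∀ r : ℝ, 0 < r → HasDerivAt β (β' r) r) ∧
  (∀ r : ℝ, 0 < r → HasDerivAt β' (β'' r) r) ∧
  ∀ r : ℝ, 0 < r →
    Bhat r * β'' r
      + (((n:ℝ) - 1)/r - deriv Bhat r - Bhat r / r) * β' r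
      + (deriv (deriv Bhat) r - deriv Bhat r / r
          + 2 * ((n:ℝ) - 1) * (1 - 2 * Bhat r) / r^2) * β r
      = 2 * ((n:ℝ) - 1) * Ahat * r * deriv Bhat r


/-- L'Hopital rule of infinity type along `atTop`. -/
lemma lhop_top {f g f' g' : ℝ → ℝ} {l R : ℝ}
    (hf : ∀ r, R < r → HasDerivAt f (f' r) r) (hg : ∀ r, R < r → HasDerivAt g (g' r) r)
    (hg' : ∀ᶠ r in atTop, 0 < g' r) (hgt : Tendsto g atTop atTop)
    (h : Tendsto (fun r => f' r / g' r) atTop (𝓝 l)) :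
    Tendsto (fun r => f r / g r) atTop (𝓝 l) := by
  have mono : ∀ {F F' : ℝ → ℝ} {S : ℝ}, (∀ r, S ≤ r → HasDerivAt F (F' r) r) →
      (∀ r, S ≤ r → 0 ≤ F' r) → ∀ r, S ≤ r → F S ≤ F r := by
    intro F F' S hF hF' r hr
    have : MonotoneOn F (Ici S) := by
      apply monotoneOn_of_deriv_nonneg (convex_Ici S)
      · intro x hx
        exact (hF x hx).continuousAt.continuousWithinAt
      · intro x hx
        rw [interior_Ici] at hx
        exact (hF x (le_of_lt hx)).differentiableAt.differentiableWithinAt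
      · intro x hx
        rw [interior_Ici] at hx
        rw [(hF x (le_of_lt hx)).deriv]
        exact hF' x (le_of_lt hx)
    exact this self_mem_Ici hr hr
  have key : ∀ ε > 0, ∀ᶠ r in atTop, |f r / g r - l| ≤ ε := by
    intro ε hε
    have h1 := (Metric.tendsto_nhds.1 h) (ε/2) (by positivity)
    obtain ⟨S, hS⟩ := eventually_atTop.1 ((h1.and hg').and (eventually_gt_atTop R))
    have hup := mono (F := fun r => (l+ε/2) * g r - f r)
      (F' := fun r => (l+ε/2) * g' r - f' r) (S := S)
      (fun r hr => ((hg r (hS r hr).2).const_mul _).sub (hf r (hS r hr).2))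
      (fun r hr => by
        obtain ⟨⟨h1, h2⟩, h3⟩ := hS r hr
        rw [Real.dist_eq, abs_lt] at h1
        have : f' r = (f' r / g' r) * g' r := by field_simp
        nlinarith)
    have hlo := mono (F := fun r => f r - (l-ε/2) * g r)
      (F' := fun r => f' r - (l-ε/2) * g' r) (S := S)
      (fun r hr => (hf r (hS r hr).2).sub ((hg r (hS r hr).2).const_mul _))
      (fun r hr => by
        obtain ⟨⟨h1, h2⟩, h3⟩ := hS r hr
        rw [Real.dist_eq, abs_lt] at h1
        have : f' r = (f' r / g' r) * g' r := by field_simp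
        nlinarith)
    set c1 := (l+ε/2) * g S - f S
    set c2 := f S - (l-ε/2) * g S
    filter_upwards [hgt.eventually_ge_atTop (2 * (|c1| + |c2| + 1) / ε), eventually_ge_atTop S]
      with r hr hrS
    have hu := hup r hrS
    have hl := hlo r hrS
    have hgp : 0 < g r := lt_of_lt_of_le (by positivity) hr
    have hr2 : 2 * (|c1| + |c2| + 1) ≤ g r * ε := by
      rwa [div_le_iff₀ hε] at hr
    have e1 : f r / g r - l = (f r - l * g r) / g r := by field_simp
    rw [e1, abs_div, abs_of_pos hgp, div_le_iff₀ hgp, abs_le]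
    have := neg_abs_le c1
    have := neg_abs_le c2
    have := abs_nonneg c1
    have := abs_nonneg c2
    constructor <;> nlinarith
  rw [Metric.tendsto_nhds]
  intro ε hε
  filter_upwards [key (ε/2) (by positivity)] with r hr
  rw [Real.dist_eq]
  linarith

/-- The collected facts on the rescaled profile. -/
structure Prof (m b κ : ℝ) (B B1 B2 B3 : ℝ → ℝ) : Prop where
  m_pos : 0 < m
  b_pos : 0 < b
  κ_pos : 0 < κ
  pos : ∀ r, 0 < r → 0 < B r
  d0 : ∀ r, 0 < r → HasDerivAt B (B1 r) r
  d1 : ∀ r, 0 < r → HasDerivAt B1 (B2 r) r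
  d2 : ∀ r, 0 < r → HasDerivAt B2 (B3 r) r
  neg : ∀ r, 0 < r → B1 r < 0
  ode : ∀ r, 0 < r → B r * B2 r - (1/2) * (B1 r)^2 + (m - B r) * B1 r / r
    + 2 * m * (1 - B r) * B r / r^2 = 0
  z0 : Tendsto B (𝓝[>] 0) (𝓝 1)
  z1 : Tendsto (fun r => B1 r / r) (𝓝[>] 0) (𝓝 (-2 * b))
  t0 : Tendsto (fun r => r^2 * B r) atTop (𝓝 κ)
  t1 : Tendsto (fun r => r^3 * B1 r) atTop (𝓝 (-2 * κ))

namespace Prof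
variable {m b κ : ℝ} {B B1 B2 B3 : ℝ → ℝ}

/-- Differentiated profile equation: it gives a solution of the homogeneous equation. -/
lemma hom (P : Prof m b κ B B1 B2 B3) (r : ℝ) (hr : 0 < r) :
    B r * (2 * B2 r + r * B3 r) + (m / r - B1 r - B r / r) * (B1 r + r * B2 r)
      + (B2 r - B1 r / r + 2 * m * (1 - 2 * B r) / r^2) * (r * B1 r) = 0 := by
  have h0 := P.d0 r hr
  have h1 := P.d1 r hr
  have h2 := P.d2 r hr
  have hi := hasDerivAt_id r
  have hne := hr.ne'
  have hD := ((((h0.mul h2).sub ((h1.pow 2).const_mul (1/2))).add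
    ((((h0.const_sub m).mul h1)).div hi hne)).add
    ((((h0.const_sub 1).const_mul (2*m)).mul h0).div (hi.pow 2) (by simpa using hne)))
  have hz : HasDerivAt (fun _ : ℝ => (0:ℝ)) 0 r := hasDerivAt_const _ _
  have heq := hD.unique (hz.congr_of_eventuallyEq ?_)
  · have ho := P.ode r hr
    have e1 := congrArg (fun x => 2 * x) ho
    have e2 := congrArg (fun x => r * x) heq
    simp only [mul_zero] at e1 e2
    refine Eq.trans ?_ ((congrArg₂ (fun x y => x + y) e1 e2).trans (add_zero 0))
    simp only [id, Pi.pow_apply, Pi.mul_apply, Nat.cast_ofNat, Nat.add_one_sub_one, pow_one]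
    field_simp
    ring
  · filter_upwards [lt_mem_nhds hr] with s hs
    have := P.ode s hs
    simpa using this

/-- Antiderivative of `m / (s B)`. -/
lemma exH (P : Prof m b κ B B1 B2 B3) :
    ∃ H : ℝ → ℝ, ∀ r, 0 < r → HasDerivAt H (m / (r * B r)) r := by
  have hc : ContinuousOn (fun s => m / (s * B s)) (Ioi 0) := by
    intro s hs
    have hs' : 0 < s := hs
    have := (P.d0 s hs').continuousAt
    have hp := P.pos s hs'
    apply ContinuousAt.continuousWithinAt
    apply ContinuousAt.div continuousAt_const (continuousAt_id.mul this)
    simp; exact ⟨hs'.ne', hp.ne'⟩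
  refine ⟨fun r => ∫ s in (1:ℝ)..r, m / (s * B s), fun r hr => ?_⟩
  apply intervalIntegral.integral_hasDerivAt_right
  · apply ContinuousOn.intervalIntegrable
    apply hc.mono
    intro x hx
    have := hx.1
    exact lt_of_lt_of_le (lt_min one_pos hr) this
  · exact hc.stronglyMeasurableAtFilter isOpen_Ioi r hr
  · exact hc.continuousAt (Ioi_mem_nhds hr)

/-- The logarithmic derivative of the weight times `r B`. -/
lemma limD (P : Prof m b κ B B1 B2 B3) :
    Tendsto B atTop (𝓝 0) ∧
    Tendsto (fun r => (m - r * B1 r - B r) + 2 * (B r + r * B r * B2 r / B1 r)) atTop (𝓝 m) := by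
  have i1 : Tendsto (fun r : ℝ => r⁻¹) atTop (𝓝 0) := tendsto_inv_atTop_zero
  have hB : Tendsto B atTop (𝓝 0) := by
    have := P.t0.mul (i1.pow 2)
    simp only [ne_eq, OfNat.ofNat_ne_zero, not_false_eq_true, zero_pow, mul_zero] at this
    refine this.congr' ?_
    filter_upwards [eventually_gt_atTop 0] with r hr
    field_simp
  have hB1 : Tendsto (fun r => r * B1 r) atTop (𝓝 0) := by
    have := P.t1.mul (i1.pow 2)
    simp only [ne_eq, OfNat.ofNat_ne_zero, not_false_eq_true, zero_pow, mul_zero] at this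
    refine this.congr' ?_
    filter_upwards [eventually_gt_atTop 0] with r hr
    field_simp
  refine ⟨hB, ?_⟩
  have hN : Tendsto (fun r => r^4 * (B r * B2 r)) atTop (𝓝 0) := by
    have e := (((P.t1.mul hB1).const_mul (1/2)).sub ((hB.const_sub m).mul P.t1)).sub
      (((hB.const_sub 1).mul P.t0).const_mul (2*m))
    have e0 : (1/2) * (-2 * κ * 0) - (m - 0) * (-2 * κ) - 2 * m * ((1 - 0) * κ) = 0 := by ring
    rw [e0] at e
    refine e.congr' ?_
    filter_upwards [eventually_gt_atTop 0] with r hr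
    have e1 := congrArg (fun x => r^4 * x) (P.ode r hr)
    simp only [mul_zero] at e1
    refine Eq.trans ?_ (sub_zero _)
    rw [← e1]
    field_simp
    ring
  have hq : Tendsto (fun r => r * B r * B2 r / B1 r) atTop (𝓝 0) := by
    have := hN.div P.t1 (by have := P.κ_pos; simp; exact this.ne')
    rw [zero_div] at this
    refine this.congr' ?_
    filter_upwards [eventually_gt_atTop 0] with r hr
    have := (P.neg r hr).ne
    simp only [Pi.div_apply]
    field_simp
  have := ((hB1.const_sub m).sub hB).add ((hB.add hq).const_mul 2)
  simpa using this

lemma part2 (P : Prof m b κ B B1 B2 B3) (a : ℝ) (β β' β'' : ℝ → ℝ)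
    (hβ : ∀ r, 0 < r → HasDerivAt β (β' r) r)
    (hβ' : ∀ r, 0 < r → HasDerivAt β' (β'' r) r)
    (heq : ∀ r, 0 < r → B r * β'' r + (m / r - B1 r - B r / r) * β' r
      + (B2 r - B1 r / r + 2 * m * (1 - 2 * B r) / r^2) * β r = 2 * m * a * r * B1 r) :
    Tendsto β atTop (𝓝 (-2 * a * κ)) := by
  obtain ⟨H, hH⟩ := P.exH
  obtain ⟨hB0, hD⟩ := P.limD
  set D : ℝ → ℝ := fun r => (m - r * B1 r - B r) + 2 * (B r + r * B r * B2 r / B1 r) with hDdef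
  -- the weight
  set E : ℝ → ℝ := fun r => Real.exp (H r) / (r * B r) with hE
  have hEpos : ∀ r, 0 < r → 0 < E r := fun r hr => by
    have := P.pos r hr
    positivity
  have hEd : ∀ r, 0 < r → HasDerivAt E (E r * ((m / r - B1 r - B r / r) / B r)) r := by
    intro r hr
    have hp := P.pos r hr
    have := ((hH r hr).exp).div ((hasDerivAt_id r).mul (P.d0 r hr))
      (by simp; exact ⟨hr.ne', hp.ne'⟩)
    refine HasDerivAt.congr_deriv this ?_
    simp only [hE, id, Pi.mul_apply]
    field_simp
    ring
  -- the homogeneous solution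
  have hb : ∀ r, 0 < r → HasDerivAt (fun r => r * B1 r) (B1 r + r * B2 r) r := by
    intro r hr
    have := (hasDerivAt_id r).mul (P.d1 r hr)
    refine HasDerivAt.congr_deriv this ?_
    simp
  have hb' : ∀ r, 0 < r → HasDerivAt (fun r => B1 r + r * B2 r) (2 * B2 r + r * B3 r) r := by
    intro r hr
    have := (P.d1 r hr).add ((hasDerivAt_id r).mul (P.d2 r hr))
    refine HasDerivAt.congr_deriv this ?_
    simp; ring
  set Q : ℝ → ℝ := fun r => E r * (r * B1 r)^2 with hQ
  have hQpos : ∀ r, 0 < r → 0 < Q r := fun r hr => by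
    have := P.neg r hr
    have h2 : r * B1 r ≠ 0 := mul_ne_zero hr.ne' this.ne
    have := hEpos r hr
    positivity
  have hQd : ∀ r, 0 < r → HasDerivAt Q (Q r * D r / (r * B r)) r := by
    intro r hr
    have hp := P.pos r hr
    have hn := (P.neg r hr).ne
    have := (hEd r hr).mul ((hb r hr).pow 2)
    refine HasDerivAt.congr_deriv this ?_
    simp only [hQ, hDdef, Pi.pow_apply]
    field_simp
    ring
  set W : ℝ → ℝ := fun r => β' r * (r * B1 r) - β r * (B1 r + r * B2 r) with hW
  have hFd : ∀ r, 0 < r → HasDerivAt (fun r => E r * W r) (2 * m * a * Q r / B r) r := by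
    intro r hr
    have hp := P.pos r hr
    have := (hEd r hr).mul (((hβ' r hr).mul (hb r hr)).sub ((hβ r hr).mul (hb' r hr)))
    refine HasDerivAt.congr_deriv this ?_
    have h1 := heq r hr
    have h2 := P.hom r hr
    simp only [hQ, Pi.mul_apply, Pi.sub_apply]
    generalize m / r - B1 r - B r / r = p at h1 h2 ⊢
    generalize B2 r - B1 r / r + 2 * m * (1 - 2 * B r) / r^2 = q at h1 h2 ⊢
    have h3 : p / B r * B r = p := div_mul_cancel₀ _ hp.ne'
    rw [eq_div_iff hp.ne']
    linear_combination (E r * r * B1 r) * h1 - E r * β r * h2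
      + E r * (β' r * (r * B1 r) - β r * (B1 r + r * B2 r)) * h3
  have hGd : ∀ r, 0 < r → HasDerivAt (fun r => r * Q r) (Q r * (1 + D r / B r)) r := by
    intro r hr
    have hp := P.pos r hr
    have := (hasDerivAt_id r).mul (hQd r hr)
    refine HasDerivAt.congr_deriv this ?_
    simp only [id]
    field_simp
  have hDpos : ∀ᶠ r in atTop, 0 < D r := hD.eventually (lt_mem_nhds P.m_pos)
  have hG'pos : ∀ᶠ r in atTop, 0 < Q r * (1 + D r / B r) := by
    filter_upwards [hDpos, eventually_gt_atTop 0] with r h1 h2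
    have := hQpos r h2
    have := P.pos r h2
    positivity
  have hGt : Tendsto (fun r => r * Q r) atTop atTop := by
    obtain ⟨S, hS⟩ := eventually_atTop.1 (hDpos.and (eventually_gt_atTop 0))
    have hmono : MonotoneOn Q (Ici S) := by
      apply monotoneOn_of_deriv_nonneg (convex_Ici S)
      · intro x hx
        exact (hQd x (hS x hx).2).continuousAt.continuousWithinAt
      · intro x hx
        rw [interior_Ici] at hx
        exact (hQd x (hS x (le_of_lt hx)).2).differentiableAt.differentiableWithinAt
      · intro x hx
        rw [interior_Ici] at hx
        obtain ⟨h1, h2⟩ := hS x (le_of_lt hx)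
        rw [(hQd x h2).deriv]
        have := hQpos x h2
        have := P.pos x h2
        positivity
    have hS0 := hQpos S (hS S le_rfl).2
    refine tendsto_atTop_mono' _ ?_ (tendsto_id.atTop_mul_const hS0)
    filter_upwards [eventually_ge_atTop S] with r hr
    exact mul_le_mul_of_nonneg_left (hmono self_mem_Ici hr hr) (hS r hr).2.le
  have hratio : Tendsto (fun r => (2 * m * a * Q r / B r) / (Q r * (1 + D r / B r)))
      atTop (𝓝 (2 * a)) := by
    have := (tendsto_const_nhds (x := 2 * m * a) (f := atTop (α := ℝ))).div (hB0.add hD)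
      (by rw [zero_add]; exact P.m_pos.ne')
    have e : 2 * m * a / (0 + m) = 2 * a := by
      have := P.m_pos
      rw [zero_add]; field_simp
    rw [e] at this
    refine this.congr' ?_
    filter_upwards [hDpos, eventually_gt_atTop 0] with r h1 h2
    have h3 := hQpos r h2
    have h4 := P.pos r h2
    have h5 : B r + D r ≠ 0 := by positivity
    have h6 : 1 + D r / B r ≠ 0 := by positivity
    simp only [Pi.div_apply]
    field_simp
  have hl1 := lhop_top (R := 0) hFd hGd hG'pos hGt hratio
  -- now the quotient by the homogeneous solution
  have hud : ∀ r, 0 < r → HasDerivAt (fun r => β r / (r * B1 r)) (W r / (r * B1 r)^2) r := by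
    intro r hr
    have := (hβ r hr).div (hb r hr) (mul_ne_zero hr.ne' (P.neg r hr).ne)
    exact this
  have hsd : ∀ r : ℝ, 0 < r → HasDerivAt (fun r : ℝ => r^2) (2 * r) r := by
    intro r hr
    simpa using hasDerivAt_pow 2 r
  have hl2 : Tendsto (fun r => (β r / (r * B1 r)) / r^2) atTop (𝓝 a) := by
    refine lhop_top (R := 0) hud hsd ?_ (tendsto_pow_atTop (by norm_num)) ?_
    · filter_upwards [eventually_gt_atTop 0] with r hr
      positivity
    · have := hl1.div_const 2
      have e : 2 * a / 2 = a := by ring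
      rw [e] at this
      refine this.congr' ?_
      filter_upwards [eventually_gt_atTop 0] with r hr
      have h1 := (P.neg r hr).ne
      have h2 := (hEpos r hr).ne'
      simp only [hQ]
      field_simp
  have := hl2.mul P.t1
  have e : a * (-2 * κ) = -2 * a * κ := by ring
  rw [e] at this
  refine this.congr' ?_
  filter_upwards [eventually_gt_atTop 0] with r hr
  have h1 := (P.neg r hr).ne
  field_simp

lemma part1 (P : Prof m b κ B B1 B2 B3) (a : ℝ) :
    ∃ β β' β'' : ℝ → ℝ,
    (∀ r, 0 < r → HasDerivAt β (β' r) r) ∧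
    (∀ r, 0 < r → HasDerivAt β' (β'' r) r) ∧
    (∀ r, 0 < r → B r * β'' r + (m / r - B1 r - B r / r) * β' r
      + (B2 r - B1 r / r + 2 * m * (1 - 2 * B r) / r^2) * β r = 2 * m * a * r * B1 r) ∧
    (fun r => β r - r^2) =o[𝓝[>] (0:ℝ)] fun r => r^2 := by
  obtain ⟨H, hH⟩ := P.exH
  have hbp := P.b_pos
  have hHmono : ∀ s r, 0 < s → s ≤ r → H s ≤ H r := by
    intro s r hs hsr
    have : MonotoneOn H (Ioi 0) := by
      apply monotoneOn_of_deriv_nonneg (convex_Ioi 0)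
      · intro x hx
        exact (hH x hx).continuousAt.continuousWithinAt
      · intro x hx
        rw [interior_Ioi] at hx
        exact (hH x hx).differentiableAt.differentiableWithinAt
      · intro x hx
        rw [interior_Ioi] at hx
        rw [(hH x hx).deriv]
        have := P.pos x hx
        have := P.m_pos
        have : 0 < x := hx
        positivity
    exact this hs (lt_of_lt_of_le hs hsr) hsr
  obtain ⟨δ, hδ, hδ'⟩ : ∃ δ > 0, ∀ r, 0 < r → r ≤ δ →
      1/2 < B r ∧ B r < 2 ∧ B1 r < -(b * r) ∧ -(3 * b * r) < B1 r := by
    have e1 := P.z0.eventually (Ioo_mem_nhds (a := 1/2) (b := 2) (by norm_num) (by norm_num))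
    have e2 := P.z1.eventually (Ioo_mem_nhds (a := -(3*b)) (b := -b) (by linarith) (by linarith))
    obtain ⟨δ, hδ, h⟩ := (mem_nhdsGT_iff_exists_Ioc_subset).1 (e1.and e2)
    refine ⟨δ, hδ, fun r h1 h2 => ?_⟩
    obtain ⟨⟨ha, hb⟩, hc, hd⟩ := h ⟨h1, h2⟩
    refine ⟨ha, hb, ?_, ?_⟩
    · rw [div_lt_iff₀ h1] at hd; linarith
    · rw [lt_div_iff₀ h1] at hc; linarith
  -- weight divided by `B`
  set M : ℝ → ℝ := fun r => if 0 < r then r * (B1 r)^2 * Real.exp (H r) / (B r)^2 else 0 with hM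
  have hMpos : ∀ r, 0 < r → M r = r * (B1 r)^2 * Real.exp (H r) / (B r)^2 := by
    intro r hr; simp only [hM, if_pos hr]
  have hMb : ∀ s r, 0 < s → s ≤ r → r ≤ δ → |M s| ≤ 36 * b^2 * r^3 * Real.exp (H r) := by
    intro s r hs hsr hrδ
    obtain ⟨h1, h2, h3, h4⟩ := hδ' s hs (hsr.trans hrδ)
    have hr : 0 < r := lt_of_lt_of_le hs hsr
    have hBs := P.pos s hs
    rw [hMpos s hs, abs_of_nonneg (by positivity), div_le_iff₀ (by positivity)]
    have i1 : (B1 s)^2 ≤ 9 * b^2 * r^2 := by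
      have j1 : (B1 s)^2 ≤ (3*b*s)^2 := by
        apply sq_le_sq'
        · linarith
        · have := P.neg s hs
          have : 0 < 3 * b * s := by positivity
          linarith
      have j2 : s^2 ≤ r^2 := by gcongr
      nlinarith [mul_le_mul_of_nonneg_left j2 (by positivity : (0:ℝ) ≤ 9 * b^2)]
    have i2 : Real.exp (H s) ≤ Real.exp (H r) := Real.exp_le_exp.2 (hHmono s r hs hsr)
    have i3 : (1/4:ℝ) ≤ (B s)^2 := by nlinarith
    calc s * (B1 s)^2 * Real.exp (H s) ≤ r * (9 * b^2 * r^2) * Real.exp (H r) := by gcongr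
      _ = 36 * b^2 * r^3 * Real.exp (H r) * (1/4) := by ring
      _ ≤ _ := by gcongr
  have hMc : Continuous M := by
    rw [continuous_iff_continuousAt]
    intro x
    rcases lt_trichotomy x 0 with hx | hx | hx
    · have : M =ᶠ[𝓝 x] fun _ => 0 := by
        filter_upwards [gt_mem_nhds hx] with y hy
        simp only [hM, if_neg (not_lt.2 hy.le)]
      exact continuousAt_const.congr this.symm
    · subst hx
      have h0 : M 0 = 0 := by simp [hM]
      rw [ContinuousAt, h0]
      apply squeeze_zero_norm' (a := fun x => 36 * b^2 * |x|^3 * Real.exp (H δ))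
      · filter_upwards [gt_mem_nhds hδ] with x hx
        rw [Real.norm_eq_abs]
        by_cases hx0 : 0 < x
        · refine (hMb x x hx0 le_rfl hx.le).trans ?_
          rw [abs_of_pos hx0]
          have := Real.exp_le_exp.2 (hHmono x δ hx0 hx.le)
          gcongr
        · simp only [hM, if_neg hx0, abs_zero]; positivity
      · have : Continuous (fun x : ℝ => 36 * b^2 * |x|^3 * Real.exp (H δ)) := by fun_prop
        have := this.tendsto 0
        simpa using this
    · have : M =ᶠ[𝓝 x] fun r => r * (B1 r)^2 * Real.exp (H r) / (B r)^2 := by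
        filter_upwards [lt_mem_nhds hx] with y hy
        exact hMpos y hy
      refine ContinuousAt.congr ?_ this.symm
      have c1 := (P.d0 x hx).continuousAt
      have c2 := (P.d1 x hx).continuousAt
      have c3 := (hH x hx).continuousAt
      have hp := P.pos x hx
      exact ((continuousAt_id.mul (c2.pow 2)).mul c3.rexp).div (c1.pow 2) (by positivity)
  set F : ℝ → ℝ := fun r => ∫ s in (0:ℝ)..r, M s with hF
  have hFd : ∀ r, HasDerivAt F (M r) r := fun r =>
    intervalIntegral.integral_hasDerivAt_right (hMc.intervalIntegrable _ _)
      hMc.aestronglyMeasurable.stronglyMeasurableAtFilter hMc.continuousAt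
  have hFb : ∀ r, 0 < r → r ≤ δ → |F r| ≤ 36 * b^2 * r^4 * Real.exp (H r) := by
    intro r hr hrδ
    have := intervalIntegral.norm_integral_le_of_norm_le_const (a := 0) (b := r) (f := M)
      (C := 36 * b^2 * r^3 * Real.exp (H r)) (fun x hx => by
        rw [uIoc_of_le hr.le] at hx
        exact hMb x r hx.1 hx.2 hrδ)
    rw [sub_zero, abs_of_pos hr, Real.norm_eq_abs] at this
    refine this.trans (le_of_eq ?_)
    ring
  set w : ℝ → ℝ := fun r => if 0 < r then -(2 * m * a) * F r / (M r * B r) else 0 with hw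
  have hwpos : ∀ r, 0 < r → w r = -(2 * m * a) * F r / (M r * B r) := by
    intro r hr; simp only [hw, if_pos hr]
  have hM0 : ∀ r, 0 < r → 0 < M r := by
    intro r hr
    rw [hMpos r hr]
    have := P.pos r hr
    have := (P.neg r hr).ne
    positivity
  have hμd : ∀ r, 0 < r → HasDerivAt (fun r => M r * B r)
      (M r * B r * (2 * (B1 r + r * B2 r) / (r * B1 r) + (m / r - B1 r - B r / r) / B r)) r := by
    intro r hr
    have hp := P.pos r hr
    have hn := (P.neg r hr).ne
    have := ((((hasDerivAt_id r).mul ((P.d1 r hr).pow 2)).mul (hH r hr).exp).div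
      (P.d0 r hr) hp.ne')
    have hcg : (fun r => M r * B r) =ᶠ[𝓝 r]
        (id * B1 ^ 2 * (fun x => Real.exp (H x))) / B := by
      filter_upwards [lt_mem_nhds hr] with s hs
      have hps := P.pos s hs
      rw [hMpos s hs]
      simp only [Pi.mul_apply, Pi.div_apply, Pi.pow_apply, id]
      field_simp
    have h2 := this.congr_of_eventuallyEq hcg
    refine HasDerivAt.congr_deriv h2 ?_
    rw [hMpos r hr]
    simp only [Pi.mul_apply, Pi.pow_apply, id]
    field_simp
    ring
  have hwd : ∀ r, 0 < r → HasDerivAt w (-(2 * m * a) / B r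
      - w r * (2 * (B1 r + r * B2 r) / (r * B1 r) + (m / r - B1 r - B r / r) / B r)) r := by
    intro r hr
    have hp := P.pos r hr
    have hMr := hM0 r hr
    have := ((hFd r).const_mul (-(2 * m * a))).div (hμd r hr) (by positivity)
    have hcg : w =ᶠ[𝓝 r] ((fun x => -(2 * m * a) * F x) / fun r => M r * B r) := by
      filter_upwards [lt_mem_nhds hr] with s hs
      rw [hwpos s hs]
      rfl
    have h2 := this.congr_of_eventuallyEq hcg
    refine HasDerivAt.congr_deriv h2 ?_
    rw [hwpos r hr]
    generalize (2 * (B1 r + r * B2 r) / (r * B1 r) + (m / r - B1 r - B r / r) / B r) = q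
    field_simp
  have hwb : ∀ r, 0 < r → r ≤ δ → |w r| ≤ 72 * |2 * m * a| * r := by
    intro r hr hrδ
    obtain ⟨h1, h2, h3, h4⟩ := hδ' r hr hrδ
    have hp := P.pos r hr
    have hMr := hM0 r hr
    rw [hwpos r hr, abs_div, abs_mul, abs_neg, abs_of_pos (by positivity : 0 < M r * B r),
      div_le_iff₀ (by positivity)]
    have i1 : b^2 * r^2 ≤ (B1 r)^2 := by
      have : 0 < b * r := by positivity
      nlinarith
    have i2 : b^2 * r^3 * Real.exp (H r) / 2 ≤ M r * B r := by
      have e : M r * B r = r * (B1 r)^2 * Real.exp (H r) / B r := by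
        rw [hMpos r hr]; field_simp
      rw [e]
      calc b^2 * r^3 * Real.exp (H r) / 2 = r * (b^2 * r^2) * Real.exp (H r) / 2 := by ring
        _ ≤ _ := by gcongr
    calc |2 * m * a| * |F r| ≤ |2 * m * a| * (36 * b^2 * r^4 * Real.exp (H r)) := by
          have := hFb r hr hrδ
          gcongr
      _ = 72 * |2 * m * a| * r * (b^2 * r^3 * Real.exp (H r) / 2) := by ring
      _ ≤ _ := by gcongr
  have hwc : Continuous w := by
    rw [continuous_iff_continuousAt]
    intro x
    rcases lt_trichotomy x 0 with hx | hx | hx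
    · have : w =ᶠ[𝓝 x] fun _ => 0 := by
        filter_upwards [gt_mem_nhds hx] with y hy
        simp only [hw, if_neg (not_lt.2 hy.le)]
      exact continuousAt_const.congr this.symm
    · subst hx
      have h0 : w 0 = 0 := by simp [hw]
      rw [ContinuousAt, h0]
      apply squeeze_zero_norm' (a := fun x => 72 * |2 * m * a| * |x|)
      · filter_upwards [gt_mem_nhds hδ] with x hx
        rw [Real.norm_eq_abs]
        by_cases hx0 : 0 < x
        · rw [abs_of_pos hx0]
          exact hwb x hx0 hx.le
        · simp only [hw, if_neg hx0, abs_zero]; positivity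
      · have : Continuous (fun x : ℝ => 72 * |2 * m * a| * |x|) := by fun_prop
        have := this.tendsto 0
        simpa using this
    · exact (hwd x hx).continuousAt
  set u : ℝ → ℝ := fun r => -1 / (2 * b) + ∫ s in (0:ℝ)..r, (-w s) with hu
  have hud : ∀ r, HasDerivAt u (-w r) r := fun r =>
    (intervalIntegral.integral_hasDerivAt_right (hwc.neg.intervalIntegrable _ _)
      hwc.neg.aestronglyMeasurable.stronglyMeasurableAtFilter hwc.neg.continuousAt).const_add _
  have hb : ∀ r, 0 < r → HasDerivAt (fun r => r * B1 r) (B1 r + r * B2 r) r := by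
    intro r hr
    have := (hasDerivAt_id r).mul (P.d1 r hr)
    refine HasDerivAt.congr_deriv this ?_
    simp
  have hb' : ∀ r, 0 < r → HasDerivAt (fun r => B1 r + r * B2 r) (2 * B2 r + r * B3 r) r := by
    intro r hr
    have := (P.d1 r hr).add ((hasDerivAt_id r).mul (P.d2 r hr))
    refine HasDerivAt.congr_deriv this ?_
    simp; ring
  refine ⟨fun r => (r * B1 r) * u r,
    fun r => (B1 r + r * B2 r) * u r + (r * B1 r) * (-w r), fun r =>
    ((2 * B2 r + r * B3 r) * u r + (B1 r + r * B2 r) * (-w r)) + ((B1 r + r * B2 r) * (-w r)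
      + (r * B1 r) * -(-(2 * m * a) / B r
      - w r * (2 * (B1 r + r * B2 r) / (r * B1 r) + (m / r - B1 r - B r / r) / B r))),
    ?_, ?_, ?_, ?_⟩
  · intro r hr
    exact (hb r hr).mul (hud r)
  · intro r hr
    exact ((hb' r hr).mul (hud r)).add ((hb r hr).mul (hwd r hr).neg)
  · intro r hr
    have h2 := P.hom r hr
    have hp := P.pos r hr
    have hn := (P.neg r hr).ne
    simp only
    generalize u r = y at *
    generalize w r = z at *
    field_simp at h2 ⊢
    linear_combination y * h2
  · rw [isLittleO_iff_tendsto']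
    · have hu0 : Tendsto u (𝓝[>] 0) (𝓝 (-1 / (2 * b))) := by
        have := (hud 0).continuousAt.tendsto
        have e : u 0 = -1 / (2 * b) := by simp [hu]
        rw [e] at this
        exact this.mono_left nhdsWithin_le_nhds
      have := (P.z1.mul hu0).sub_const 1
      have e : -2 * b * (-1 / (2 * b)) - 1 = 0 := by field_simp; norm_num
      rw [e] at this
      refine this.congr' ?_
      filter_upwards [self_mem_nhdsWithin] with r hr
      have : 0 < r := hr
      field_simp
    · filter_upwards [self_mem_nhdsWithin] with r hr h0
      have : 0 < r := hr
      exact absurd h0 (by positivity)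

end Prof

lemma mkProf (n : ℕ) (hn : 2 ≤ n) (A : ℝ) (hA : 0 < A) (𝔅 : BryantProfile n) :
    Prof ((n:ℝ) - 1) (𝔅.b * A^2) (1 / A^2) (fun r => 𝔅.toFun (A * r))
      (fun r => A * deriv 𝔅.toFun (A * r)) (fun r => A^2 * deriv (deriv 𝔅.toFun) (A * r))
      (fun r => A^3 * deriv (deriv (deriv 𝔅.toFun)) (A * r)) := by
  have hsm : ContDiffOn ℝ (⊤ : ℕ∞) 𝔅.toFun (Ioi 0) := 𝔅.smooth.mono Ioi_subset_Ici_self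
  have hs1 : ContDiffOn ℝ (⊤ : ℕ∞) (deriv 𝔅.toFun) (Ioi 0) :=
    ((contDiffOn_infty_iff_deriv_of_isOpen isOpen_Ioi).1 hsm).2
  have hs2 : ContDiffOn ℝ (⊤ : ℕ∞) (deriv (deriv 𝔅.toFun)) (Ioi 0) :=
    ((contDiffOn_infty_iff_deriv_of_isOpen isOpen_Ioi).1 hs1).2
  have hd : ∀ f : ℝ → ℝ, ContDiffOn ℝ (⊤ : ℕ∞) f (Ioi 0) → ∀ r, 0 < r →
      HasDerivAt (fun r => f (A * r)) (A * deriv f (A * r)) r := by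
    intro f hf r hr
    have hAr : 0 < A * r := by positivity
    have h1 : HasDerivAt f (deriv f (A * r)) (A * r) :=
      (((hf.differentiableOn (by simp)) _ hAr).differentiableAt (Ioi_mem_nhds hAr)).hasDerivAt
    have h2 : HasDerivAt (fun r => A * r) A r := by
      simpa using (hasDerivAt_id r).const_mul A
    have := h1.comp r h2
    rw [mul_comm]
    exact this
  have hmulT : Tendsto (fun r => A * r) atTop atTop := tendsto_id.const_mul_atTop hA
  have hmul0 : Tendsto (fun r => A * r) (𝓝[>] 0) (𝓝[>] 0) := by
    rw [tendsto_nhdsWithin_iff]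
    constructor
    · have : Continuous (fun r : ℝ => A * r) := by fun_prop
      have := this.tendsto 0
      rw [mul_zero] at this
      exact this.mono_left nhdsWithin_le_nhds
    · filter_upwards [self_mem_nhdsWithin] with r hr
      have : 0 < r := hr
      exact mem_Ioi.2 (by positivity)
  have i1 : Tendsto (fun r : ℝ => r⁻¹) atTop (𝓝 0) := tendsto_inv_atTop_zero
  have id0 : Tendsto (fun r : ℝ => r) (𝓝[>] 0) (𝓝 0) := nhdsWithin_le_nhds
  have hrp : ∀ (k : ℕ) (r : ℝ), 0 < r → r ^ (-(k:ℝ)) = (r^k)⁻¹ := by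
    intro k r hr
    rw [Real.rpow_neg hr.le, Real.rpow_natCast]
  refine ⟨?_, ?_, ?_, ?_, ?_, ?_, ?_, ?_, ?_, ?_, ?_, ?_, ?_⟩
  · have : (2:ℝ) ≤ n := by exact_mod_cast hn
    linarith
  · have := 𝔅.b_pos
    positivity
  · positivity
  · intro r hr
    exact (𝔅.mem_Ioc (A * r) (by positivity)).1
  · exact hd _ hsm
  · intro r hr
    have := (hd _ hs1 r hr).const_mul A
    refine HasDerivAt.congr_deriv this ?_
    ring
  · intro r hr
    have := (hd _ hs2 r hr).const_mul (A^2)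
    refine HasDerivAt.congr_deriv this ?_
    ring
  · intro r hr
    have := 𝔅.deriv_neg (A * r) (by positivity)
    nlinarith
  · intro r hr
    have := 𝔅.soliton (A * r) (by positivity)
    unfold Eop at this
    field_simp at this ⊢
    linear_combination this
  · have h : Tendsto 𝔅.toFun (𝓝[>] 0) (𝓝 1) := by
      have h1 := (𝔅.smooth.continuousOn 0 self_mem_Ici).tendsto
      rw [𝔅.val_zero] at h1
      exact h1.mono_left (nhdsWithin_mono _ Ioi_subset_Ici_self)
    exact h.comp hmul0
  · have h : Tendsto (fun ρ => deriv 𝔅.toFun ρ / ρ) (𝓝[>] 0) (𝓝 (-2 * 𝔅.b)) := by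
      have h1 := 𝔅.expand_zero_deriv.mul (isBigO_refl (fun ρ : ℝ => ρ⁻¹) (𝓝[>] 0))
      have h2 : Tendsto (fun ρ : ℝ => ρ^3 * ρ⁻¹) (𝓝[>] 0) (𝓝 0) := by
        have := id0.pow 2
        rw [zero_pow (by norm_num)] at this
        refine this.congr' ?_
        filter_upwards [self_mem_nhdsWithin] with r hr
        have : 0 < r := hr
        field_simp
      have h3 := (h1.trans_tendsto h2).add_const (-2 * 𝔅.b)
      rw [zero_add] at h3
      refine h3.congr' ?_
      filter_upwards [self_mem_nhdsWithin] with r hr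
      have : 0 < r := hr
      field_simp
      ring
    have := (h.comp hmul0).const_mul (A^2)
    have e : A^2 * (-2 * 𝔅.b) = -2 * (𝔅.b * A^2) := by ring
    rw [e] at this
    refine this.congr' ?_
    filter_upwards [self_mem_nhdsWithin] with r hr
    have : 0 < r := hr
    simp only [Function.comp]
    field_simp
  · have h : Tendsto (fun ρ => ρ^2 * 𝔅.toFun ρ) atTop (𝓝 1) := by
      have h1 := (isBigO_refl (fun ρ : ℝ => ρ^2) atTop).mul 𝔅.expand_top
      have h2 : Tendsto (fun ρ : ℝ => ρ^2 * ρ ^ (-6:ℝ)) atTop (𝓝 0) := by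
        have := i1.pow 4
        rw [zero_pow (by norm_num)] at this
        refine this.congr' ?_
        filter_upwards [eventually_gt_atTop 0] with r hr
        have := hrp 6 r hr
        push_cast at this
        rw [this]
        field_simp
      have h3 := (h1.trans_tendsto h2).add (((i1.pow 2).const_mul 𝔅.b2).const_add 1)
      have e : 0 + (1 + 𝔅.b2 * 0^2) = (1:ℝ) := by ring
      rw [e] at h3
      refine h3.congr' ?_
      filter_upwards [eventually_gt_atTop 0] with r hr
      have e1 := hrp 2 r hr
      have e2 := hrp 4 r hr
      push_cast at e1 e2
      rw [e1, e2]
      field_simp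
      ring
    have := (h.comp hmulT).const_mul (1 / A^2)
    rw [mul_one] at this
    refine this.congr' ?_
    filter_upwards with r
    simp only [Function.comp]
    field_simp
  · have h : Tendsto (fun ρ => ρ^3 * deriv 𝔅.toFun ρ) atTop (𝓝 (-2)) := by
      have h1 := (isBigO_refl (fun ρ : ℝ => ρ^3) atTop).mul 𝔅.expand_top_deriv
      have h2 : Tendsto (fun ρ : ℝ => ρ^3 * ρ ^ (-7:ℝ)) atTop (𝓝 0) := by
        have := i1.pow 4
        rw [zero_pow (by norm_num)] at this
        refine this.congr' ?_
        filter_upwards [eventually_gt_atTop 0] with r hr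
        have := hrp 7 r hr
        push_cast at this
        rw [this]
        field_simp
      have h3 := (h1.trans_tendsto h2).add (((i1.pow 2).const_mul (-4 * 𝔅.b2)).const_add (-2))
      have e : 0 + (-2 + -4 * 𝔅.b2 * 0^2) = (-2:ℝ) := by ring
      rw [e] at h3
      refine h3.congr' ?_
      filter_upwards [eventually_gt_atTop 0] with r hr
      have e1 := hrp 3 r hr
      have e2 := hrp 5 r hr
      push_cast at e1 e2
      rw [e1, e2]
      field_simp
      ring
    have := (h.comp hmulT).const_mul (1 / A^2)
    have e : 1 / A^2 * (-2) = -2 * (1 / A^2) := by ring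
    rw [e] at this
    refine this.congr' ?_
    filter_upwards with r
    simp only [Function.comp]
    field_simp

/-- existence of a particular solution `β_p = r² + o(r²)` at `0`,
and convergence `β(r) → -2Â/A₄²` at `∞` for every solution, where `Â = 1/k + 1`. -/
theorem stmt6 (n k : ℕ) (hn : 2 ≤ n) (hk : 3 ≤ k) (A₄ : ℝ) (hA₄ : 0 < A₄)
    (𝔅 : BryantProfile n) :
    (∃ βp βp' βp'' : ℝ → ℝ,
      IsBetaSol n (1/(k:ℝ) + 1) (fun r => 𝔅.toFun (A₄ * r)) βp βp' βp'' ∧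
      (fun r => βp r - r^2) =o[𝓝[>] (0:ℝ)] fun r => r^2) ∧
    (∀ β β' β'' : ℝ → ℝ,
      IsBetaSol n (1/(k:ℝ) + 1) (fun r => 𝔅.toFun (A₄ * r)) β β' β'' →
      Filter.Tendsto β Filter.atTop (𝓝 (-2 * (1/(k:ℝ) + 1) / A₄^2))) := by
  have P := mkProf n hn A₄ hA₄ 𝔅
  have hd1 : ∀ r, 0 < r → deriv (fun r => 𝔅.toFun (A₄ * r)) r = A₄ * deriv 𝔅.toFun (A₄ * r) :=
    fun r hr => (P.d0 r hr).deriv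
  have hd2 : ∀ r, 0 < r → deriv (deriv (fun r => 𝔅.toFun (A₄ * r))) r
      = A₄^2 * deriv (deriv 𝔅.toFun) (A₄ * r) := by
    intro r hr
    refine ((P.d1 r hr).congr_of_eventuallyEq ?_).deriv
    filter_upwards [lt_mem_nhds hr] with s hs
    exact hd1 s hs
  constructor
  · obtain ⟨β, β', β'', h1, h2, h3, h4⟩ := P.part1 (1/(k:ℝ) + 1)
    refine ⟨β, β', β'', ⟨h1, h2, fun r hr => ?_⟩, h4⟩
    rw [hd1 r hr, hd2 r hr]
    exact h3 r hr
  · intro β β' β'' ⟨h1, h2, h3⟩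
    have := P.part2 (1/(k:ℝ) + 1) β β' β'' h1 h2 (fun r hr => by
      have := h3 r hr
      rw [hd1 r hr, hd2 r hr] at this
      exact this)
    rw [mul_one_div] at this
    exact this
end

section
/- Fix integers n ≥ 2 and k ≥ 3, and set γ_k := 1/2 − 1/k and μ_k := k/2 − 1. For any A₅ > 0 there exist a function ζ̃ : (1,∞) → ℝ and constants A₆ and B₅ > 0, depending only on n, k, A₅, such that the functions z̃_±(u,τ) := A₅ e^{−2γ_k τ}(u² − 1)^{1+2γ_k} u^{−2} ± A₆ e^{−4γ_k τ} ζ̃(u) satisfy D_u[z̃₊] ≥ 0 (supersolution) and D_u[z̃₋] ≤ 0 (subsolution) at every point of the region 1 + B₅ e^{−μ_k τ} ≤ u ≤ B₅^{−1} e^{τ/2}. -/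
open Topology Filter Asymptotics Set

/-- The model function `(x²-1)^p x^m`. -/
noncomputable def HH (p m x : ℝ) : ℝ := (x^2 - 1) ^ p * x ^ m

lemma HH_deriv (p m x : ℝ) (hx : 1 < x) :
    HasDerivAt (HH p m) (2 * p * HH (p-1) (m+1) x + m * HH p (m-1) x) x := by
  have hs : 0 < x^2 - 1 := by nlinarith
  have h0 : 0 < x := by linarith
  have h1 : HasDerivAt (fun y : ℝ => y^2 - 1) (2 * x) x := by
    simpa using (hasDerivAt_pow 2 x).sub_const 1
  have h2 := h1.rpow_const (p := p) (Or.inl hs.ne')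
  have h3 := Real.hasDerivAt_rpow_const (p := m) (Or.inl h0.ne')
  have h4 := h2.mul h3
  unfold HH
  refine h4.congr_deriv ?_
  rw [Real.rpow_add h0, Real.rpow_one]
  ring

lemma HH_eq1 (p m x : ℝ) (hx : 1 < x) : HH (p-1) (m+1) x = HH p m x * x / (x^2-1) := by
  have hs : 0 < x^2 - 1 := by nlinarith
  have h0 : 0 < x := by linarith
  unfold HH
  rw [Real.rpow_add h0, Real.rpow_one, Real.rpow_sub hs, Real.rpow_one]
  field_simp

lemma HH_eq2 (p m x : ℝ) (hx : 1 < x) : HH p (m-1) x = HH p m x / x := by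
  have h0 : 0 < x := by linarith
  unfold HH
  rw [Real.rpow_sub h0, Real.rpow_one]
  field_simp

lemma HH_m2 (p x : ℝ) (hx : 1 < x) : HH p (-2) x = (x^2-1)^p / x^2 := by
  have h0 : 0 < x := by linarith
  unfold HH
  rw [Real.rpow_neg h0.le, Real.rpow_ofNat]
  rfl

lemma Z_deriv (a b p q x : ℝ) (hx : 1 < x) :
    HasDerivAt (fun y => a * HH p (-2) y + b * HH q (-2) y)
      (a * (2 * p * HH (p-1) (-2+1) x + (-2) * HH p (-2-1) x)
        + b * (2 * q * HH (q-1) (-2+1) x + (-2) * HH q (-2-1) x)) x :=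
  ((HH_deriv p (-2) x hx).const_mul a).add ((HH_deriv q (-2) x hx).const_mul b)

lemma Z_deriv1 (a b p q x : ℝ) (hx : 1 < x) :
    deriv (fun y => a * HH p (-2) y + b * HH q (-2) y) x =
      (2 * (p * (a * (x^2-1)^p) + q * (b * (x^2-1)^q))
        - 2 * ((x^2-1)/x^2) * (a * (x^2-1)^p + b * (x^2-1)^q)) / ((x^2-1) * x) := by
  have hs : 0 < x^2 - 1 := by nlinarith
  have h0 : 0 < x := by linarith
  rw [(Z_deriv a b p q x hx).deriv, HH_eq1 _ _ _ hx, HH_eq1 _ _ _ hx, HH_eq2 _ _ _ hx,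
    HH_eq2 _ _ _ hx, HH_m2 _ _ hx, HH_m2 _ _ hx]
  generalize (x^2-1)^p = P
  generalize (x^2-1)^q = R
  field_simp
  ring

lemma Z_deriv2 (a b p q x : ℝ) (hx : 1 < x) :
    deriv (deriv (fun y => a * HH p (-2) y + b * HH q (-2) y)) x =
      ((4*p*(p-1) - 6*p*((x^2-1)/x^2) + 6*((x^2-1)/x^2)^2) * (a * (x^2-1)^p)
       + (4*q*(q-1) - 6*q*((x^2-1)/x^2) + 6*((x^2-1)/x^2)^2) * (b * (x^2-1)^q)) / (x^2-1)^2 := by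
  have hs : 0 < x^2 - 1 := by nlinarith
  have h0 : 0 < x := by linarith
  have hev : deriv (fun y => a * HH p (-2) y + b * HH q (-2) y) =ᶠ[𝓝 x]
      (fun y => a * (2 * p * HH (p-1) (-2+1) y + (-2) * HH p (-2-1) y)
        + b * (2 * q * HH (q-1) (-2+1) y + (-2) * HH q (-2-1) y)) := by
    filter_upwards [lt_mem_nhds hx] with y hy
    exact (Z_deriv a b p q y hy).deriv
  rw [hev.deriv_eq]
  have key : ∀ p : ℝ, HasDerivAt (fun y => 2 * p * HH (p-1) (-2+1) y + (-2) * HH p (-2-1) y)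
      (2 * p * (2 * (p-1) * HH (p-1-1) (-2+1+1) x + (-2+1) * HH (p-1) (-2+1-1) x)
        + (-2) * (2 * p * HH (p-1) (-2-1+1) x + (-2-1) * HH p (-2-1-1) x)) x := fun p =>
    ((HH_deriv _ _ x hx).const_mul _).add ((HH_deriv _ _ x hx).const_mul _)
  refine (((key p).const_mul a).add ((key q).const_mul b)).deriv.trans ?_
  simp only [HH_eq1 _ _ _ hx, HH_eq2 _ _ _ hx, HH_m2 _ _ hx]
  generalize (x^2-1)^p = P
  generalize (x^2-1)^q = R
  field_simp
  ring

/-- Formula for the operator on the two-term ansatz. -/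
lemma Dop_formula (n : ℕ) (g a b u τ : ℝ) (hu : 1 < u) (X Y s r : ℝ)
    (hs : s = u^2 - 1) (hr : r = s / u^2)
    (hX : X = a * Real.exp (-2 * g * τ) * s ^ (1 + 2 * g))
    (hY : Y = b * Real.exp (-4 * g * τ) * s ^ (4 * g)) :
    Dop n (fun x t => a * Real.exp (-2 * g * t) * HH (1 + 2 * g) (-2) x
        + b * Real.exp (-4 * g * t) * HH (4 * g) (-2) x) u τ =
      (-Y * s^2 - ((X + Y) * ((4*(1+2*g)*(2*g) - 6*(1+2*g)*r + 6*r^2) * X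
          + (4*(4*g)*(4*g-1) - 6*(4*g)*r + 6*r^2) * Y)
        - (1/2) * (2*((1+2*g)*X + 4*g*Y) - 2*r*(X+Y))^2
        - (X+Y) * (2*((1+2*g)*X + 4*g*Y) - 2*r*(X+Y)) * r
        - 2*((n:ℝ)-1) * (r*(X+Y))^2) / (2*((n:ℝ)-1))) / (s^2*u^2) := by
  have hs0 : 0 < u^2 - 1 := by nlinarith
  have h0 : 0 < u := by linarith
  have ht : HasDerivAt (fun t => a * Real.exp (-2 * g * t) * HH (1 + 2 * g) (-2) u
        + b * Real.exp (-4 * g * t) * HH (4 * g) (-2) u)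
      (a * (Real.exp (-2 * g * τ) * (-2 * g)) * HH (1 + 2 * g) (-2) u
        + b * (Real.exp (-4 * g * τ) * (-4 * g)) * HH (4 * g) (-2) u) τ := by
    have e : ∀ c : ℝ, HasDerivAt (fun t => Real.exp (c * t)) (Real.exp (c * τ) * c) τ := by
      intro c
      have := ((hasDerivAt_id τ).const_mul c).exp
      simpa using this
    exact (((e _).const_mul a).mul_const _).add (((e _).const_mul b).mul_const _)
  unfold Dop Qop
  rw [ht.deriv, Z_deriv2 _ _ _ _ _ hu, Z_deriv1 _ _ _ _ _ hu]
  beta_reduce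
  rw [HH_m2 _ _ hu, HH_m2 _ _ hu]
  rw [← hs, ← hr]
  rw [← hX, ← hY]
  have eX : a * (Real.exp (-2 * g * τ) * (-2 * g)) * (s ^ (1 + 2 * g) / u^2) = -2*g*X/u^2 := by
    rw [hX]; ring
  have eY : b * (Real.exp (-4 * g * τ) * (-4 * g)) * (s ^ (4 * g) / u^2) = -4*g*Y/u^2 := by
    rw [hY]; ring
  have eX' : a * Real.exp (-2 * g * τ) * (s ^ (1 + 2 * g) / u^2) = X/u^2 := by
    rw [hX]; ring
  have eY' : b * Real.exp (-4 * g * τ) * (s ^ (4 * g) / u^2) = Y/u^2 := by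
    rw [hY]; ring
  rw [eX, eY, eX', eY']
  clear eX eY eX' eY' hX hY ht
  have hsp : 0 < s := by rw [hs]; exact hs0
  have hQ : (X / u ^ 2 + Y / u ^ 2) *
      (((4*(1+2*g)*(1+2*g-1) - 6*(1+2*g)*r + 6*r^2) * X
          + (4*(4*g)*(4*g-1) - 6*(4*g)*r + 6*r^2) * Y) / s^2)
      - 1/2 * ((2*((1+2*g)*X + 4*g*Y) - 2*r*(X+Y)) / (s*u))^2
      - (X / u ^ 2 + Y / u ^ 2) * ((2*((1+2*g)*X + 4*g*Y) - 2*r*(X+Y)) / (s*u)) / u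
      - 2*((n:ℝ)-1) * (X / u ^ 2 + Y / u ^ 2)^2 / u^2 =
      ((X + Y) * ((4*(1+2*g)*(2*g) - 6*(1+2*g)*r + 6*r^2) * X
          + (4*(4*g)*(4*g-1) - 6*(4*g)*r + 6*r^2) * Y)
        - (1/2) * (2*((1+2*g)*X + 4*g*Y) - 2*r*(X+Y))^2
        - (X+Y) * (2*((1+2*g)*X + 4*g*Y) - 2*r*(X+Y)) * r
        - 2*((n:ℝ)-1) * (r*(X+Y))^2) / (s^2*u^2) := by
    rw [hr]
    field_simp
    ring
  have hL : -2*g*X/u^2 + -4*g*Y/u^2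
      - 1/2 * (u⁻¹ - u) * ((2*((1+2*g)*X + 4*g*Y) - 2*r*(X+Y)) / (s*u))
      - (X / u ^ 2 + Y / u ^ 2) / u^2 = -Y/u^2 := by
    have : u⁻¹ - u = - s / u := by rw [hs]; field_simp; ring
    rw [this, hr]
    field_simp
    rw [hs]
    ring
  rw [hQ, hL]
  field_simp

/-- Bound on the quadratic part. -/
lemma quad_bound (N g X Y r : ℝ) (hN : 1 ≤ N) (hg0 : 0 ≤ g) (hg : g ≤ 1/2)
    (hr0 : 0 ≤ r) (hr : r ≤ 1) (hXY : |Y| ≤ X) :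
    |((X + Y) * ((4*(1+2*g)*(2*g) - 6*(1+2*g)*r + 6*r^2) * X
          + (4*(4*g)*(4*g-1) - 6*(4*g)*r + 6*r^2) * Y)
        - (1/2) * (2*((1+2*g)*X + 4*g*Y) - 2*r*(X+Y))^2
        - (X+Y) * (2*((1+2*g)*X + 4*g*Y) - 2*r*(X+Y)) * r
        - 2*N * (r*(X+Y))^2) / (2*N)| ≤ 104 * X^2 := by
  have hX : 0 ≤ X := (abs_nonneg _).trans hXY
  have hr2 : r^2 ≤ 1 := by nlinarith
  have hr20 : 0 ≤ r^2 := sq_nonneg r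
  have hgr0 : 0 ≤ g * r := by positivity
  have hgr : g * r ≤ 1/2 := by nlinarith
  have hg2 : g^2 ≤ 1/4 := by nlinarith
  have c1 : |4*(1+2*g)*(2*g) - 6*(1+2*g)*r + 6*r^2| ≤ 26 := by
    rw [abs_le]; constructor <;> nlinarith
  have c2 : |4*(4*g)*(4*g-1) - 6*(4*g)*r + 6*r^2| ≤ 26 := by
    rw [abs_le]; constructor <;> nlinarith
  have hS : |X + Y| ≤ 2 * X := by
    refine (abs_add_le _ _).trans ?_
    rw [abs_of_nonneg hX]; linarith
  have hW2 : |(4*(1+2*g)*(2*g) - 6*(1+2*g)*r + 6*r^2) * X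
          + (4*(4*g)*(4*g-1) - 6*(4*g)*r + 6*r^2) * Y| ≤ 52 * X := by
    refine (abs_add_le _ _).trans ?_
    rw [abs_mul, abs_mul, abs_of_nonneg hX]
    have := mul_le_mul c1 le_rfl hX (by norm_num)
    have := mul_le_mul c2 hXY (abs_nonneg Y) (by norm_num)
    linarith
  have hrS : |r * (X+Y)| ≤ 2 * X := by
    rw [abs_mul, abs_of_nonneg hr0]
    nlinarith [abs_nonneg (X+Y)]
  have hW1 : |2*((1+2*g)*X + 4*g*Y) - 2*r*(X+Y)| ≤ 12 * X := by
    have e1 : |(1+2*g)*X| ≤ 2 * X := by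
      rw [abs_of_nonneg (by positivity)]; nlinarith
    have e2 : |4*g*Y| ≤ 2 * X := by
      rw [abs_mul, abs_of_nonneg (by positivity)]
      nlinarith [abs_nonneg Y]
    rw [abs_le] at *
    constructor <;> nlinarith
  generalize (4*(1+2*g)*(2*g) - 6*(1+2*g)*r + 6*r^2) * X
          + (4*(4*g)*(4*g-1) - 6*(4*g)*r + 6*r^2) * Y = W2 at *
  generalize 2*((1+2*g)*X + 4*g*Y) - 2*r*(X+Y) = W1 at *
  have t1 : |(X+Y) * W2| ≤ 104 * X^2 := by
    rw [abs_mul]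
    have := mul_le_mul hS hW2 (abs_nonneg _) (by positivity)
    linarith
  have t2 : W1^2 ≤ 144 * X^2 := by
    rw [← sq_abs]
    have := pow_le_pow_left₀ (abs_nonneg _) hW1 2
    linarith
  have t3 : |(X+Y) * W1 * r| ≤ 24 * X^2 := by
    have e : (X+Y) * W1 * r = (r * (X+Y)) * W1 := by ring
    rw [e, abs_mul]
    have := mul_le_mul hrS hW1 (abs_nonneg _) (by positivity)
    linarith
  have t4 : (r*(X+Y))^2 ≤ 4 * X^2 := by
    rw [← sq_abs]
    have := pow_le_pow_left₀ (abs_nonneg _) hrS 2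
    linarith
  have t40 := sq_nonneg (r*(X+Y))
  have t20 := sq_nonneg W1
  have hX2 := sq_nonneg X
  generalize (X+Y) * W2 = T1 at *
  generalize W1^2 = T2 at *
  generalize (X+Y) * W1 * r = T3 at *
  generalize (r*(X+Y))^2 = T4 at *
  generalize X^2 = V at *
  rw [abs_le] at t1 t3
  rw [abs_div, abs_of_pos (by linarith : 0 < 2*N), div_le_iff₀ (by linarith), abs_le]
  have k1 := mul_le_mul_of_nonneg_left t4 (by linarith : 0 ≤ N)
  have k2 := mul_nonneg (by linarith : 0 ≤ N) t40
  have k3 := mul_le_mul_of_nonneg_right hN hX2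
  constructor <;> nlinarith

lemma Dop_sign (n : ℕ) (hn : 2 ≤ n) (g A u τ : ℝ) (hu : 1 < u) (hA : 0 < A)
    (hg0 : 0 ≤ g) (hg : g ≤ 1/2)
    (hsmall : 104 * A * Real.exp (-2 * g * τ) ≤ (u^2-1) ^ (1 - 2*g)) :
    0 ≤ Dop n (fun x t => A * Real.exp (-2 * g * t) * HH (1 + 2 * g) (-2) x
        + (-(104 * A^2)) * Real.exp (-4 * g * t) * HH (4 * g) (-2) x) u τ ∧
    Dop n (fun x t => A * Real.exp (-2 * g * t) * HH (1 + 2 * g) (-2) x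
        + (104 * A^2) * Real.exp (-4 * g * t) * HH (4 * g) (-2) x) u τ ≤ 0 := by
  have hs0 : 0 < u^2 - 1 := by nlinarith
  have h0 : 0 < u := by linarith
  have hN : (1:ℝ) ≤ (n:ℝ) - 1 := by
    have : (2:ℝ) ≤ n := by exact_mod_cast hn
    linarith
  rw [Dop_formula n g A _ u τ hu _ _ _ _ rfl rfl rfl rfl,
    Dop_formula n g A _ u τ hu _ _ _ _ rfl rfl rfl rfl]
  have hr0 : 0 ≤ (u^2-1)/u^2 := by positivity
  have hr : (u^2-1)/u^2 ≤ 1 := by rw [div_le_one (by positivity)]; linarith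
  have hexp : Real.exp (-4 * g * τ) = Real.exp (-2 * g * τ) ^ 2 := by
    rw [← Real.exp_nat_mul]; congr 1; push_cast; ring
  have hM : 104 * A^2 * Real.exp (-4 * g * τ) * (u^2-1) ^ (4 * g) * (u^2-1)^2
      = 104 * (A * Real.exp (-2 * g * τ) * (u^2-1) ^ (1 + 2 * g))^2 := by
    have : (u^2-1) ^ (4*g) * (u^2-1)^2 = ((u^2-1) ^ (1 + 2 * g))^2 := by
      generalize u^2-1 = s at hs0
      have e : s ^ 2 = s ^ (2:ℝ) := (Real.rpow_ofNat s 2).symm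
      rw [e, ← Real.rpow_add hs0, ← Real.rpow_mul_natCast hs0.le]
      congr 1; push_cast; ring
    rw [hexp, mul_pow, ← this]; ring
  have hle : 104 * A^2 * Real.exp (-4 * g * τ) * (u^2-1) ^ (4 * g)
      ≤ A * Real.exp (-2 * g * τ) * (u^2-1) ^ (1 + 2 * g) := by
    have e : (u^2-1) ^ (1 + 2 * g) = (u^2-1) ^ (1 - 2 * g) * (u^2-1) ^ (4 * g) := by
      rw [← Real.rpow_add hs0]; congr 1; ring
    rw [e, hexp]
    have := mul_le_mul_of_nonneg_left hsmall
      (by positivity : 0 ≤ A * Real.exp (-2 * g * τ) * (u^2-1) ^ (4 * g))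
    nlinarith
  have hM0 : 0 ≤ 104 * A^2 * Real.exp (-4 * g * τ) * (u^2-1) ^ (4 * g) := by positivity
  have hneg : -(104 * A^2) * Real.exp (-4 * g * τ) * (u^2-1) ^ (4 * g)
     = -(104 * A^2 * Real.exp (-4 * g * τ) * (u^2-1) ^ (4 * g)) := by ring
  rw [hneg]
  generalize 104 * A^2 * Real.exp (-4 * g * τ) * (u^2-1) ^ (4 * g) = M at *
  generalize A * Real.exp (-2 * g * τ) * (u^2-1) ^ (1 + 2 * g) = X at *
  have b1 := quad_bound ((n:ℝ)-1) g X M _ hN hg0 hg hr0 hr (by rwa [abs_of_nonneg hM0])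
  have b2 := quad_bound ((n:ℝ)-1) g X (-M) _ hN hg0 hg hr0 hr
    (by rwa [abs_neg, abs_of_nonneg hM0])
  rw [abs_le] at b1 b2
  constructor
  · apply div_nonneg _ (by positivity)
    linarith [b2.2]
  · apply div_nonpos_of_nonpos_of_nonneg _ (by positivity)
    linarith [b1.1]

/-- sub- and supersolutions in the outer region. -/
theorem stmt9 (n k : ℕ) (hn : 2 ≤ n) (hk : 3 ≤ k) (A₅ : ℝ) (hA₅ : 0 < A₅) :
    ∃ (ζt : ℝ → ℝ) (A₆ B₅ : ℝ), 0 < B₅ ∧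
      ∀ u τ : ℝ,
        1 + B₅ * Real.exp (-mu k * τ) ≤ u → u ≤ B₅⁻¹ * Real.exp (τ/2) →
        0 ≤ Dop n (fun u' τ' =>
            A₅ * Real.exp (-2 * gam k * τ') * (u'^2 - 1) ^ (1 + 2 * gam k) * u' ^ (-2:ℝ)
              + A₆ * Real.exp (-4 * gam k * τ') * ζt u') u τ ∧
        Dop n (fun u' τ' =>
            A₅ * Real.exp (-2 * gam k * τ') * (u'^2 - 1) ^ (1 + 2 * gam k) * u' ^ (-2:ℝ)
              - A₆ * Real.exp (-4 * gam k * τ') * ζt u') u τ ≤ 0 := by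
  have hk' : (3:ℝ) ≤ k := by exact_mod_cast hk
  have hk0 : (0:ℝ) < k := by linarith
  have hik : 1 / (k:ℝ) ≤ 1/3 := by
    apply one_div_le_one_div_of_le <;> linarith
  have hik0 : 0 < 1 / (k:ℝ) := by positivity
  have hg0 : 0 ≤ gam k := by unfold gam; linarith
  have hg : gam k ≤ 1/2 := by unfold gam; linarith
  have hB : 0 < (104 * A₅) ^ ((k:ℝ)/2) := by positivity
  refine ⟨fun x => - HH (4 * gam k) (-2) x, 104 * A₅^2, (104 * A₅) ^ ((k:ℝ)/2), hB, ?_⟩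
  intro u τ h1 _
  have hpos : 0 < (104 * A₅) ^ ((k:ℝ)/2) * Real.exp (-mu k * τ) := by positivity
  have hu : 1 < u := by linarith
  have hsm : 104 * A₅ * Real.exp (-2 * gam k * τ) ≤ (u^2-1) ^ (1 - 2 * gam k) := by
    have hle : (104 * A₅) ^ ((k:ℝ)/2) * Real.exp (-mu k * τ) ≤ u^2 - 1 := by nlinarith
    have e0 : 1 - 2 * gam k = 2 / (k:ℝ) := by unfold gam; ring
    have := Real.rpow_le_rpow hpos.le hle (by positivity : 0 ≤ 2 / (k:ℝ))
    rw [e0]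
    refine le_trans (le_of_eq ?_) this
    rw [Real.mul_rpow hB.le (Real.exp_pos _).le, ← Real.rpow_mul (by positivity), ← Real.exp_mul]
    have e1 : (k:ℝ)/2 * (2/(k:ℝ)) = 1 := by field_simp
    have e2 : -mu k * τ * (2/(k:ℝ)) = -2 * gam k * τ := by
      unfold mu gam; field_simp
    rw [e1, e2, Real.rpow_one]
  have main := Dop_sign n hn (gam k) A₅ u τ hu hA₅ hg0 hg hsm
  have f1 : (fun u' τ' =>
            A₅ * Real.exp (-2 * gam k * τ') * (u'^2 - 1) ^ (1 + 2 * gam k) * u' ^ (-2:ℝ)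
              + 104 * A₅^2 * Real.exp (-4 * gam k * τ') * (fun x => - HH (4 * gam k) (-2) x) u')
      = (fun x t => A₅ * Real.exp (-2 * gam k * t) * HH (1 + 2 * gam k) (-2) x
        + (-(104 * A₅^2)) * Real.exp (-4 * gam k * t) * HH (4 * gam k) (-2) x) := by
    funext x t; simp only [HH]; ring
  have f2 : (fun u' τ' =>
            A₅ * Real.exp (-2 * gam k * τ') * (u'^2 - 1) ^ (1 + 2 * gam k) * u' ^ (-2:ℝ)
              - 104 * A₅^2 * Real.exp (-4 * gam k * τ') * (fun x => - HH (4 * gam k) (-2) x) u')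
      = (fun x t => A₅ * Real.exp (-2 * gam k * t) * HH (1 + 2 * gam k) (-2) x
        + (104 * A₅^2) * Real.exp (-4 * gam k * t) * HH (4 * gam k) (-2) x) := by
    funext x t; simp only [HH]; ring
  rw [f1, f2]
  exact main
end

section
/- Fix an integer k ≥ 3 and a constant b_k < 0; set μ_k := k/2 − 1. Let h_k be the degree-k monic Hermite polynomial orthogonal in L²(ℝ, e^{−σ²/4}dσ), and let C_k be a constant such that |h_k(σ) − σ^k| ≤ C_k|σ|^{k−2} for all |σ| ≥ 1. Let B > 0 be such that P := 2(B/|b_k|)^{1/k} satisfies P ≥ (10/3)√C_k. Then for every W > 0 there exists ε₀ > 0, depending only on k, b_k, B, W, such that for every ε ∈ (0, ε₀) the following holds: if f : [−P,P] → ℝ is C¹ with ∫_{−P}^{P} (f(σ) − b_k h_k(σ))² e^{−σ²/4} dσ ≤ 9ε² and sup_{|σ|≤P}(|f(σ)| + |f′(σ)|) ≤ W, then |f(2P/5)| < B, and |f(σ)| > B for every σ with 3P/5 ≤ |σ| ≤ P. -/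
open Topology Filter Asymptotics Set MeasureTheory

/-- `P = 2(B/|b_k|)^{1/k}`. -/
noncomputable def Pdef (k : ℕ) (bk B : ℝ) : ℝ := 2 * (B / |bk|) ^ ((1:ℝ)/(k:ℝ))

open Polynomial in
lemma aux_int (p : Polynomial ℝ) :
    Integrable (fun σ : ℝ => p.eval σ * Real.exp (-σ^2/4)) := by
  induction p using Polynomial.induction_on' with
  | add p q hp hq =>
    refine (hp.add hq).congr (Eventually.of_forall fun x => ?_)
    simp [add_mul]
  | monomial n a =>
    have h1 := integrable_rpow_mul_exp_neg_mul_sq (b := 1/4) (by norm_num) (s := (n:ℝ))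
      (by have : (0:ℝ) ≤ n := Nat.cast_nonneg n
          linarith)
    refine (h1.const_mul a).congr (Eventually.of_forall fun x => ?_)
    simp only [Real.rpow_natCast, eval_monomial]
    rw [show -(1/4:ℝ) * x^2 = -x^2/4 by ring]
    ring

/-- Gaussian integral functional. -/
noncomputable def auxI : Polynomial ℝ →ₗ[ℝ] ℝ where
  toFun p := ∫ σ : ℝ, p.eval σ * Real.exp (-σ^2/4)
  map_add' p q := by
    rw [← integral_add (aux_int p) (aux_int q)]
    simp [add_mul]
  map_smul' c p := by
    simp only [Polynomial.eval_smul, smul_eq_mul, RingHom.id_apply, mul_assoc]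
    rw [integral_const_mul]

open Polynomial in
lemma auxI_ibp (p : Polynomial ℝ) :
    auxI (derivative p - C (1/2) * X * p) = 0 := by
  refine integral_eq_zero_of_hasDerivAt_of_integrable
    (f := fun σ : ℝ => p.eval σ * Real.exp (-σ^2/4)) ?_ (aux_int _) (aux_int p)
  intro x
  have h1 : HasDerivAt (fun σ : ℝ => -σ^2/4) (-(2*x)/4) x := by
    have := (((hasDerivAt_id x).pow 2).neg).div_const 4
    simpa using this
  have := (p.hasDerivAt x).mul h1.exp
  refine HasDerivAt.congr_deriv this ?_
  simp only [eval_sub, eval_mul, eval_C, eval_X]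
  ring

open Polynomial in
lemma auxI_sq (p : Polynomial ℝ) (h : auxI (p * p) = 0) : p = 0 := by
  have h0 : (fun σ : ℝ => (p*p).eval σ * Real.exp (-σ^2/4)) =ᵐ[volume] 0 := by
    rw [← integral_eq_zero_iff_of_nonneg _ (aux_int _)]
    · exact h
    · intro x
      simp only [eval_mul, Pi.zero_apply]
      exact mul_nonneg (mul_self_nonneg _) (Real.exp_pos _).le
  have h1 : (fun σ : ℝ => (p*p).eval σ * Real.exp (-σ^2/4)) = 0 := by
    refine (Continuous.ae_eq_iff_eq volume ?_ continuous_const).1 h0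
    exact (p*p).continuous.mul (by fun_prop)
  apply Polynomial.funext
  intro x
  have := congrFun h1 x
  simpa [(Real.exp_pos _).ne'] using this

open Polynomial in
lemma auxI_orth (k : ℕ) (h : Polynomial ℝ) (horth : ∀ j : ℕ, j < k →
      ∫ σ : ℝ, σ^j * h.eval σ * Real.exp (-σ^2/4) = 0) (q : Polynomial ℝ) (hq : q.degree < k) :
    auxI (h * q) = 0 := by
  rw [q.as_sum_range' k.succ ((natDegree_le_of_degree_le hq.le).trans_lt (Nat.lt_succ_self k)),
    Finset.mul_sum, map_sum]
  apply Finset.sum_eq_zero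
  intro i hi
  rcases (Nat.lt_succ_iff.1 (Finset.mem_range.1 hi)).lt_or_eq with hi | hi
  · have : h * monomial i (q.coeff i) = (q.coeff i) • (X^i * h) := by
      rw [← C_mul_X_pow_eq_monomial, smul_eq_C_mul]; ring
    rw [this, map_smul]
    have : auxI (X^i * h) = 0 := by
      rw [← horth i hi]; simp [auxI]
    rw [this, smul_zero]
  · rw [coeff_eq_zero_of_degree_lt (by rw [hi]; exact hq)]; simp

open Polynomial in
lemma aux_ode (k : ℕ) (h : Polynomial ℝ)
    (hdeg : h.natDegree = k)
    (horth : ∀ j : ℕ, j < k →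
      ∫ σ : ℝ, σ^j * h.eval σ * Real.exp (-σ^2/4) = 0) :
    derivative (derivative h) - C (1/2) * (X * derivative h) + C ((k:ℝ)/2) * h = 0 := by
  set R := derivative (derivative h) - C (1/2) * (X * derivative h) + C ((k:ℝ)/2) * h with hR
  have hXd : ∀ (q : Polynomial ℝ) (n : ℕ), (X * derivative q).coeff n = n * q.coeff n := by
    intro q n
    cases n with
    | zero => simp
    | succ n => rw [coeff_X_mul, coeff_derivative]; push_cast; ring
  have hop : ∀ q : Polynomial ℝ, ∀ d : ℕ, (∀ m, d < m → q.coeff m = 0) → ∀ c : ℝ, ∀ m, d < m →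
      (derivative (derivative q) - C (1/2) * (X * derivative q) + C c * q).coeff m = 0 := by
    intro q d hq c m hm
    simp only [coeff_add, coeff_sub, coeff_C_mul, hXd, coeff_derivative]
    rw [hq m hm, hq (m+1+1) (by omega)]
    simp
  have hh : ∀ m, k < m → h.coeff m = 0 := fun m hm => coeff_eq_zero_of_natDegree_lt (by omega)
  have hRd : R.degree < k := by
    rw [degree_lt_iff_coeff_zero]
    intro m hm
    rcases hm.lt_or_eq with hm | rfl
    · exact hop h k hh _ m hm
    · simp only [hR, coeff_add, coeff_sub, coeff_C_mul, hXd, coeff_derivative]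
      rw [hh (k+1+1) (by omega)]
      ring
  have key : auxI (R * R) = auxI (h * (derivative (derivative R) - C (1/2) * (X * derivative R)
      + C ((k:ℝ)/2) * R)) := by
    have e1 := auxI_ibp (derivative h * R)
    have e2 := auxI_ibp (h * derivative R)
    rw [← sub_eq_zero, ← map_sub]
    rw [← sub_self (0:ℝ)]
    nth_rw 1 [← e1]
    rw [← e2, ← map_sub]
    congr 1
    simp only [derivative_mul]
    nth_rw 1 [hR]
    ring
  apply auxI_sq
  rw [key]
  apply auxI_orth k h horth
  rw [degree_lt_iff_coeff_zero] at hRd ⊢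
  intro m hm
  simp only [coeff_add, coeff_sub, coeff_C_mul, hXd, coeff_derivative]
  rw [hRd m hm, hRd (m+1+1) (by omega)]
  simp

open Polynomial in
lemma aux_C (k : ℕ) (hk : 3 ≤ k)
    (h : Polynomial ℝ) (hmonic : h.Monic) (hdeg : h.natDegree = k)
    (horth : ∀ j : ℕ, j < k →
      ∫ σ : ℝ, σ^j * h.eval σ * Real.exp (-σ^2/4) = 0)
    (Ck : ℝ)
    (hCk : ∀ σ : ℝ, 1 ≤ |σ| → |h.eval σ - σ^k| ≤ Ck * |σ|^(k-2)) : 6 ≤ Ck := by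
  have hode := aux_ode k h hdeg horth
  obtain ⟨n, rfl⟩ : ∃ n, k = n + 2 := ⟨k - 2, by omega⟩
  have hn : 1 ≤ n := by omega
  simp only [Nat.add_sub_cancel] at hCk
  have hlead : h.coeff (n+2) = 1 := by rw [← hdeg]; exact hmonic
  have hXd : ∀ (q : Polynomial ℝ) (n : ℕ), (X * derivative q).coeff n = n * q.coeff n := by
    intro q n
    cases n with
    | zero => simp
    | succ n => rw [coeff_X_mul, coeff_derivative]; push_cast; ring
  have c1 : h.coeff (n+1) = 0 := by
    have := congrArg (fun p => p.coeff (n+1)) hode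
    simp only [coeff_add, coeff_sub, coeff_C_mul, hXd, coeff_derivative, coeff_zero] at this
    rw [coeff_eq_zero_of_natDegree_lt (by omega : h.natDegree < n+1+1+1)] at this
    push_cast at this
    linarith
  have c2 : h.coeff n = -((n+2)*(n+1)) := by
    have := congrArg (fun p => p.coeff n) hode
    simp only [coeff_add, coeff_sub, coeff_C_mul, hXd, coeff_derivative, coeff_zero] at this
    rw [show n+1+1 = n+2 from rfl, hlead] at this
    push_cast at this
    linarith
  have hnR : (1:ℝ) ≤ n := by exact_mod_cast hn
  set p := h - X^(n+2) with hp
  have pn : p.coeff n = -((n+2)*(n+1)) := by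
    rw [hp, coeff_sub, c2, coeff_X_pow, if_neg (by omega)]; ring
  have pn0 : p.coeff n ≠ 0 := by rw [pn]; nlinarith
  have pd : p.degree = n := by
    apply le_antisymm
    · rw [degree_le_iff_coeff_zero]
      intro m hm
      have hm : n < m := by exact_mod_cast hm
      rw [hp, coeff_sub, coeff_X_pow]
      rcases lt_trichotomy m (n+2) with h1 | h1 | h1
      · have : m = n+1 := by omega
        subst this; rw [c1]; simp
      · subst h1; rw [hlead]; simp
      · rw [coeff_eq_zero_of_natDegree_lt (by omega), if_neg (by omega)]; simp
    · exact le_degree_of_ne_zero pn0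
  have hl : p.leadingCoeff = p.coeff n := by
    rw [leadingCoeff, natDegree_eq_of_degree_eq_some pd]
  have ht := Polynomial.div_tendsto_atTop_leadingCoeff_div_of_degree_eq p (X^n) (by rw [pd, degree_X_pow])
  rw [hl, pn, (monic_X_pow n).leadingCoeff, div_one] at ht
  have hle := le_of_tendsto ht.abs (b := Ck) (by
    filter_upwards [eventually_ge_atTop (1:ℝ)] with x hx
    have hx0 : 0 < x := by linarith
    have := hCk x (by rw [abs_of_pos hx0]; exact hx)
    rw [abs_of_pos hx0] at this
    rw [abs_div, eval_pow, eval_X, abs_of_pos (pow_pos hx0 n), div_le_iff₀ (pow_pos hx0 n)]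
    simpa [hp] using this)
  rw [abs_neg, abs_of_pos (by positivity)] at hle
  nlinarith

lemma aux_interp (P L δ : ℝ) (hP : 0 < P) (hL : 0 < L) (hδ : 0 < δ) :
    ∃ ε₀ : ℝ, 0 < ε₀ ∧ ∀ ε : ℝ, 0 < ε → ε < ε₀ → ∀ g : ℝ → ℝ,
      ContinuousOn g (Icc (-P) P) → DifferentiableOn ℝ g (Ioo (-P) P) →
      (∀ x ∈ Ioo (-P) P, |deriv g x| ≤ L) →
      (∫ σ in (-P)..P, (g σ)^2 * Real.exp (-σ^2/4)) ≤ 9 * ε^2 →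
      ∀ x ∈ Icc (-P) P, |g x| < δ := by
  set l := min (δ/(2*L)) P with hl
  have hl0 : 0 < l := lt_min (by positivity) hP
  have hlP : l ≤ P := min_le_right _ _
  have hLl : L * l ≤ δ/2 := by
    have : l ≤ δ/(2*L) := min_le_left _ _
    rw [le_div_iff₀ (by positivity)] at this
    linarith
  set K := l * ((δ/2)^2 * Real.exp (-P^2/4)) with hK
  have hK0 : 0 < K := by positivity
  refine ⟨Real.sqrt K / 3, by positivity, ?_⟩
  intro ε hε hεε g hc hd hb hi x hx
  by_contra hcon
  push Not at hcon
  have hεK : 9 * ε^2 < K := by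
    have h1 := Real.sq_sqrt hK0.le
    have h2 := Real.sqrt_nonneg K
    nlinarith
  have hlip : ∀ u ∈ Icc (-P) P, ∀ v ∈ Icc (-P) P, u < v → |g v - g u| ≤ L * (v - u) := by
    intro u hu v hv huv
    obtain ⟨c, hc1, hc2⟩ := exists_deriv_eq_slope g huv (hc.mono (Icc_subset_Icc hu.1 hv.2))
      (hd.mono (Ioo_subset_Ioo hu.1 hv.2))
    have h1 := hb c ⟨hu.1.trans_lt hc1.1, hc1.2.trans_le hv.2⟩
    rw [hc2, abs_div, abs_of_pos (sub_pos.2 huv), div_le_iff₀ (sub_pos.2 huv)] at h1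
    exact h1
  have hlow : ∀ y ∈ Icc (-P) P, |y - x| ≤ l → δ/2 ≤ |g y| := by
    intro y hy hyx
    have h1 : |g x - g y| ≤ L * |y - x| := by
      rcases lt_trichotomy x y with h | h | h
      · rw [abs_sub_comm, abs_of_pos (sub_pos.2 h)]; exact hlip x hx y hy h
      · subst h; simp
      · rw [abs_sub_comm y x, abs_of_pos (sub_pos.2 h)]; exact hlip y hy x hx h
    have h2 : L * |y - x| ≤ L * l := by gcongr
    have h3 := abs_sub_abs_le_abs_sub (g x) (g y)
    linarith
  obtain ⟨a, ha1, ha2, ha3⟩ : ∃ a, -P ≤ a ∧ a + l ≤ P ∧ ∀ y ∈ Icc a (a+l), |y - x| ≤ l := by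
    rcases le_total x 0 with h | h
    · refine ⟨x, hx.1, by linarith, fun y hy => ?_⟩
      rw [abs_le]; constructor <;> linarith [hy.1, hy.2]
    · refine ⟨x - l, by linarith, by linarith [hx.2], fun y hy => ?_⟩
      rw [abs_le]; constructor <;> linarith [hy.1, hy.2]
  have hcont : ContinuousOn (fun σ => (g σ)^2 * Real.exp (-σ^2/4)) (Icc (-P) P) :=
    (hc.pow 2).mul (by fun_prop)
  have hint : IntervalIntegrable (fun σ => (g σ)^2 * Real.exp (-σ^2/4)) volume (-P) P :=
    hcont.intervalIntegrable_of_Icc (by linarith)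
  have hint2 : IntervalIntegrable (fun σ => (g σ)^2 * Real.exp (-σ^2/4)) volume a (a+l) :=
    (hcont.mono (Icc_subset_Icc ha1 ha2)).intervalIntegrable_of_Icc (by linarith)
  have h1 : ∫ σ in a..(a+l), (g σ)^2 * Real.exp (-σ^2/4) ≤
      ∫ σ in (-P)..P, (g σ)^2 * Real.exp (-σ^2/4) :=
    intervalIntegral.integral_mono_interval ha1 (by linarith) ha2
      (Eventually.of_forall fun σ => by simp only [Pi.zero_apply]; positivity) hint
  have h2 : ∫ σ in a..(a+l), ((δ/2)^2 * Real.exp (-P^2/4)) ≤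
      ∫ σ in a..(a+l), (g σ)^2 * Real.exp (-σ^2/4) := by
    refine intervalIntegral.integral_mono_on (by linarith) (by simp) hint2 ?_
    intro y hy
    have hyP : y ∈ Icc (-P) P := ⟨ha1.trans hy.1, hy.2.trans ha2⟩
    have h3 := hlow y hyP (ha3 y hy)
    have h4 : y^2 ≤ P^2 := sq_le_sq' hyP.1 hyP.2
    rw [← sq_abs (g y)]
    gcongr
  rw [intervalIntegral.integral_const, smul_eq_mul, add_sub_cancel_left] at h2
  linarith

/-- pointwise control at the parabolic–intermediate interface for
functions `f` (playing the role of `e^{μ_k τ} v(·,τ)`) that are `L²`-close to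
`b_k h_k` and have `C¹` norm at most `W`. -/
theorem stmt12 (k : ℕ) (hk : 3 ≤ k) (bk : ℝ) (hbk : bk < 0)
    (h : Polynomial ℝ) (hmonic : h.Monic) (hdeg : h.natDegree = k)
    (horth : ∀ j : ℕ, j < k →
      ∫ σ : ℝ, σ^j * h.eval σ * Real.exp (-σ^2/4) = 0)
    (Ck : ℝ) (hCk0 : 0 ≤ Ck)
    (hCk : ∀ σ : ℝ, 1 ≤ |σ| → |h.eval σ - σ^k| ≤ Ck * |σ|^(k-2))
    (B : ℝ) (hB : 0 < B)
    (hP : (10/3) * Real.sqrt Ck ≤ Pdef k bk B)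
    (W : ℝ) (hW : 0 < W) :
    ∃ ε₀ : ℝ, 0 < ε₀ ∧ ∀ ε : ℝ, 0 < ε → ε < ε₀ →
      ∀ f : ℝ → ℝ,
        ContDiffOn ℝ 1 f (Set.Icc (-(Pdef k bk B)) (Pdef k bk B)) →
        (∫ σ in (-(Pdef k bk B))..(Pdef k bk B),
            (f σ - bk * h.eval σ)^2 * Real.exp (-σ^2/4)) ≤ 9 * ε^2 →
        (∀ σ : ℝ, |σ| ≤ Pdef k bk B → |f σ| + |deriv f σ| ≤ W) →
        |f (2 * Pdef k bk B / 5)| < B ∧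
        ∀ σ : ℝ, 3 * Pdef k bk B / 5 ≤ |σ| → |σ| ≤ Pdef k bk B → B < |f σ| := by
  have hC6 : 6 ≤ Ck := aux_C k hk h hmonic hdeg horth Ck hCk
  set P := Pdef k bk B with hPdef
  have habs : 0 < |bk| := abs_pos.2 hbk.ne
  have hPB : |bk| * (P/2)^k = B := by
    rw [hPdef, Pdef, mul_div_cancel_left₀ _ (two_ne_zero), one_div,
      Real.rpow_inv_natCast_pow (by positivity) (by omega)]
    field_simp
  have hCP : Ck ≤ 9/100 * P^2 := by
    have h1 := Real.sq_sqrt hCk0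
    have h2 := Real.sqrt_nonneg Ck
    nlinarith
  have hP0 : 0 < P := by
    have : 0 < Real.sqrt Ck := Real.sqrt_pos.2 (by linarith)
    linarith
  have hP5 : 5/2 ≤ P := by nlinarith
  obtain ⟨n, rfl⟩ : ∃ n, k = n + 2 := ⟨k - 2, by omega⟩
  simp only [Nat.add_sub_cancel] at hCk
  -- upper bound
  have hup : |bk * h.eval (2*P/5)| ≤ 4/5 * B := by
    have hx0 : 0 < 2*P/5 := by positivity
    have h1 := hCk (2*P/5) (by rw [abs_of_pos hx0]; linarith)
    rw [abs_of_pos hx0] at h1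
    have h2 : Ck * (2*P/5)^n ≤ 9/16 * (2*P/5)^(n+2) := by
      have : Ck ≤ 9/16 * (2*P/5)^2 := by nlinarith
      calc Ck * (2*P/5)^n ≤ (9/16 * (2*P/5)^2) * (2*P/5)^n := by gcongr
        _ = _ := by ring
    have h3 : |h.eval (2*P/5)| ≤ 25/16 * (2*P/5)^(n+2) := by
      have := abs_sub_abs_le_abs_sub (h.eval (2*P/5)) ((2*P/5)^(n+2))
      rw [abs_of_pos (pow_pos hx0 _)] at this
      linarith
    have h4 : (2*P/5)^(n+2) = (4/5)^(n+2) * (P/2)^(n+2) := by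
      rw [← mul_pow]; congr 1; ring
    have h5 : (4/5:ℝ)^(n+2) ≤ (4/5)^3 :=
      pow_le_pow_of_le_one (by norm_num) (by norm_num) hk
    rw [abs_mul]
    calc |bk| * |h.eval (2*P/5)| ≤ |bk| * (25/16 * ((4/5)^3 * (P/2)^(n+2))) := by
          gcongr
          refine h3.trans ?_
          rw [h4]; gcongr
      _ = 4/5 * (|bk| * (P/2)^(n+2)) := by ring
      _ = 4/5 * B := by rw [hPB]
  have hlo : ∀ σ : ℝ, 3*P/5 ≤ |σ| → 6/5 * B ≤ |bk * h.eval σ| := by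
    intro σ hσ
    have hx0 : 0 < |σ| := by linarith
    have h1 := hCk σ (by linarith)
    have h2 : Ck * |σ|^n ≤ 1/4 * |σ|^(n+2) := by
      have : Ck ≤ 1/4 * |σ|^2 := by nlinarith
      calc Ck * |σ|^n ≤ (1/4 * |σ|^2) * |σ|^n := by gcongr
        _ = _ := by ring
    have h3 : 3/4 * |σ|^(n+2) ≤ |h.eval σ| := by
      have := abs_sub_abs_le_abs_sub (σ^(n+2)) (h.eval σ)
      rw [abs_sub_comm, abs_pow] at this
      linarith
    have h4 : (6/5)^(n+2) * (P/2)^(n+2) ≤ |σ|^(n+2) := by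
      rw [← mul_pow]; gcongr; linarith
    have h5 : (6/5:ℝ)^3 ≤ (6/5)^(n+2) :=
      pow_le_pow_right₀ (by norm_num) hk
    rw [abs_mul]
    calc 6/5 * B ≤ 3/4 * (6/5)^3 * B := by nlinarith
      _ = |bk| * (3/4 * ((6/5)^3 * (P/2)^(n+2))) := by rw [← hPB]; ring
      _ ≤ |bk| * (3/4 * ((6/5)^(n+2) * (P/2)^(n+2))) := by gcongr
      _ ≤ |bk| * (3/4 * |σ|^(n+2)) := by gcongr
      _ ≤ _ := by gcongr
  obtain ⟨M, hM⟩ := (isCompact_Icc (a := -P) (b := P)).exists_bound_of_continuousOn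
    (f := fun x => bk * h.derivative.eval x) (by fun_prop)
  have hM0 : 0 ≤ M := (norm_nonneg _).trans (hM 0 ⟨by linarith, hP0.le⟩)
  obtain ⟨ε₀, hε0, hmain⟩ := aux_interp P (W + M) (B/5) hP0 (by linarith) (by linarith)
  refine ⟨ε₀, hε0, ?_⟩
  intro ε hε hεε f hf hint hbd
  have hfd : ∀ x ∈ Ioo (-P) P, DifferentiableAt ℝ f x := fun x hx =>
    (hf.differentiableOn one_ne_zero).differentiableAt (Icc_mem_nhds hx.1 hx.2)
  have hpd : ∀ x, HasDerivAt (fun y => bk * h.eval y) (bk * h.derivative.eval x) x := fun x =>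
    (h.hasDerivAt x).const_mul bk
  have hg := hmain ε hε hεε (fun σ => f σ - bk * h.eval σ)
    (hf.continuousOn.sub (by fun_prop))
    (fun x hx => ((hfd x hx).sub (hpd x).differentiableAt).differentiableWithinAt)
    (fun x hx => by
      have h1 : HasDerivAt (fun σ => f σ - bk * h.eval σ) _ x := (hfd x hx).hasDerivAt.sub (hpd x)
      rw [h1.deriv]
      have h2 := hM x ⟨hx.1.le, hx.2.le⟩
      rw [Real.norm_eq_abs] at h2
      have h3 := hbd x (abs_le.2 ⟨hx.1.le, hx.2.le⟩)
      have h4 := abs_sub (deriv f x) (bk * h.derivative.eval x)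
      have h5 := abs_nonneg (f x)
      linarith) hint
  constructor
  · have h1 := hg (2*P/5) ⟨by linarith, by linarith⟩
    have h2 := abs_sub_abs_le_abs_sub (f (2*P/5)) (bk * h.eval (2*P/5))
    linarith
  · intro σ h1 h2
    have h3 := hg σ (abs_le.1 h2)
    have h4 := hlo σ h1
    have h5 := abs_sub_abs_le_abs_sub (bk * h.eval σ) (f σ)
    rw [abs_sub_comm] at h5
    linarith
end
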